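/- arXiv:1707.05581 — 5 statements merged into one kernel-verified Lean document; each statement's English description precedes it below -/
import Mathlib

section
/- Let H be a strongly quasiconvex subgroup of a finitely generated group G. Then H has bounded packing in G: for every D ≥ 0 there exists N ∈ ℕ such that for any collection of N distinct left cosets gH in G, at least two of them are at distance at least D from each other in the word metric on G. -/
/-!
Strong quasiconvexity is a statement about every geodesic model of the Cayley graph, so one such
model has to be built before it says anything. It is the geometric realization of the graph, a
quotient of a type of points on edges; as a finitely generated group is countable, it can be taken
in the lowest universe. The Morse property is then transferred to discrete quasi-geodesics in the
word metric and, by left translation, to all left cosets with one gauge (`UMorse`).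

The packing argument has two ingredients.

* A coarse Helly property (`exists_common_point`): for each `k` there is `R` such that any `k`
  pairwise `D`-close cosets have a point in their common `R`-neighborhood. By induction on `k`,
  choose `x` near all cosets but `bH`, `y` near all but `aH`, and `z` near `aH` and `bH`. A geodesic
  from `x` to `y` stays near all the other cosets. A shortest path from `z` to this geodesic,
  continued along it towards `x` or `y`, is a `(3,0)`-quasi-geodesic with ends near `aH` or `bH`,
  so the point of the geodesic nearest to `z` is near these two as well.

* Independence of the width (`near_midpoint`): a geodesic of length at least `10R` with ends in the
  `R`-neighborhood of a coset has its midpoint within `M` of the coset, where `M` does not depend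
  on `R`. Indeed, completing its middle part by shortest paths to the coset gives a
  `(3,0)`-quasi-geodesic with ends on the coset.

A point is `M`-close to at most as many distinct cosets as the ball of radius `M` has elements. Let
`k` exceed this number, and let `R` be the Helly constant for `k + 1` cosets. Given many pairwise
`D`-close cosets, fix `k` of them with a common `R`-near point `p`. Any further coset has, together
with these `k`, a common `R`-near point `q`; the distance of `p` and `q` is at most `10R`, as
otherwise the midpoint of a geodesic between them would be `M`-close to `k` cosets. So all the
cosets meet the ball of radius `11R` about `p`, which bounds their number.
-/

open Metric Set Pointwise
open scoped ENNReal

noncomputable section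

/-- The `(K,C)`-quasi-isometric-embedding inequalities for a map `γ : ℝ → X`
restricted to a subset `s ⊆ ℝ`; for `s` an interval this is the notion of a
`(K,C)`-quasi-geodesic. -/
def QIEmbedOn {X : Type*} [MetricSpace X] (γ : ℝ → X) (s : Set ℝ) (K C : ℝ) : Prop :=
  ∀ a ∈ s, ∀ b ∈ s,
    (1 / K) * |a - b| - C ≤ dist (γ a) (γ b) ∧ dist (γ a) (γ b) ≤ K * |a - b| + C

/-- `Φ` is a `(K,L)`-quasi-isometric embedding. -/
def QIEmbeddingWith {A X : Type*} [MetricSpace A] [MetricSpace X] (Φ : A → X)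
    (K L : ℝ) : Prop :=
  1 ≤ K ∧ 0 ≤ L ∧ ∀ a b : A,
    (1 / K) * dist a b - L ≤ dist (Φ a) (Φ b) ∧ dist (Φ a) (Φ b) ≤ K * dist a b + L

/-- `Φ` is a quasi-isometric embedding. -/
def IsQIEmbedding {A X : Type*} [MetricSpace A] [MetricSpace X] (Φ : A → X) : Prop :=
  ∃ K L : ℝ, QIEmbeddingWith Φ K L

/-- A metric space is geodesic if every pair of points is joined by an isometrically
parametrized segment. -/
def IsGeodesicSpace (X : Type*) [MetricSpace X] : Prop :=
  ∀ x y : X, ∃ γ : ℝ → X, γ 0 = x ∧ γ (dist x y) = y ∧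
    ∀ s ∈ Icc (0 : ℝ) (dist x y), ∀ t ∈ Icc (0 : ℝ) (dist x y), dist (γ s) (γ t) = |s - t|

/-- A subset `A` is Morse: every `(K,C)`-quasi-geodesic with endpoints on `A` stays in a
uniform `M = M(K,C)` neighborhood of `A`. -/
def IsMorse {X : Type*} [MetricSpace X] (A : Set X) : Prop :=
  ∀ K C : ℝ, 1 ≤ K → 0 ≤ C → ∃ M : ℝ, 0 ≤ M ∧
    ∀ (γ : ℝ → X) (a b : ℝ), a ≤ b → QIEmbedOn γ (Icc a b) K C →
      γ a ∈ A → γ b ∈ A → ∀ t ∈ Icc a b, infDist (γ t) A ≤ M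

/-- `A` is Morse with the specific Morse gauge `N`. -/
def MorseWithGauge {X : Type*} [MetricSpace X] (A : Set X) (N : ℝ → ℝ → ℝ) : Prop :=
  ∀ K C : ℝ, 1 ≤ K → 0 ≤ C →
    ∀ (γ : ℝ → X) (a b : ℝ), a ≤ b → QIEmbedOn γ (Icc a b) K C →
      γ a ∈ A → γ b ∈ A → ∀ t ∈ Icc a b, infDist (γ t) A ≤ N K C

/-- A subset `A ⊆ X` is stable: any two `(K,L)`-quasi-geodesics with the same endpoints
on `A` are at uniformly bounded Hausdorff distance `R = R(K,L)`. -/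
def IsStableSubset {X : Type*} [MetricSpace X] (A : Set X) : Prop :=
  ∀ K L : ℝ, 1 ≤ K → 0 ≤ L → ∃ R : ℝ, 0 ≤ R ∧
    ∀ (γ γ' : ℝ → X) (a b a' b' : ℝ), a ≤ b → a' ≤ b' →
      QIEmbedOn γ (Icc a b) K L → QIEmbedOn γ' (Icc a' b') K L →
      γ a = γ' a' → γ b = γ' b' → γ a ∈ A → γ b ∈ A →
      hausdorffDist (γ '' Icc a b) (γ' '' Icc a' b') < R

/-- `s` is (the image of) a geodesic segment from `x` to `y`. -/
def IsGeodesicSegment {X : Type*} [MetricSpace X] (s : Set X) (x y : X) : Prop :=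
  ∃ γ : ℝ → X, γ 0 = x ∧ γ (dist x y) = y ∧ s = γ '' Icc 0 (dist x y) ∧
    ∀ u ∈ Icc (0 : ℝ) (dist x y), ∀ v ∈ Icc (0 : ℝ) (dist x y), dist (γ u) (γ v) = |u - v|

/-- `X` is (Gromov) hyperbolic: there is `δ ≥ 0` such that every geodesic triangle is
`δ`-thin (each side lies in the `δ`-neighborhood of the union of the other two sides). -/
def IsHyperbolic (X : Type*) [MetricSpace X] : Prop :=
  ∃ δ : ℝ, 0 ≤ δ ∧ ∀ x y z : X, ∀ s₁ s₂ s₃ : Set X,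
    IsGeodesicSegment s₁ x y → IsGeodesicSegment s₂ y z → IsGeodesicSegment s₃ x z →
    ∀ p ∈ s₃, infDist p (s₁ ∪ s₂) ≤ δ

/-- The induced length (pseudo)distance `d_r(x,y)` on the complement of the open
`r`-neighborhood of `A`: the infimum of lengths of paths from `x` to `y` staying at
distance at least `r` from `A` (with value `∞` if there is no such path). -/
def relPathDist {X : Type*} [MetricSpace X] (A : Set X) (r : ℝ) (x y : X) : ℝ≥0∞ :=
  ⨅ (γ : ℝ → X) (a : ℝ) (b : ℝ) (_ : a ≤ b) (_ : ContinuousOn γ (Icc a b))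
    (_ : γ a = x) (_ : γ b = y) (_ : ∀ t ∈ Icc a b, r ≤ infDist (γ t) A),
    eVariationOn γ (Icc a b)

/-- The lower relative divergence `σ^n_ρ(r)` of `X` with respect to `A`:
the infimum of `d_{ρr}(x,y)` over `x, y ∈ ∂N_r(A)` with `d_r(x,y) < ∞` and
`d(x,y) ≥ n r` (and `∞` if there is no such pair). -/
def lowerRelDiv {X : Type*} [MetricSpace X] (A : Set X) (n : ℕ) (ρ r : ℝ) : ℝ≥0∞ :=
  ⨅ (x : X) (y : X) (_ : infDist x A = r) (_ : infDist y A = r)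
    (_ : relPathDist A r x y ≠ ⊤) (_ : (n : ℝ) * r ≤ dist x y),
    relPathDist A (ρ * r) x y

/-- `f : [0,∞) → [0,∞]` is completely super linear: for each `C > 0` the set of `x ≥ 0`
with `f x ≤ C x` is bounded. -/
def CompletelySuperLinear (f : ℝ → ℝ≥0∞) : Prop :=
  ∀ C : ℝ, 0 < C → ∃ B : ℝ, ∀ x : ℝ, 0 ≤ x → f x ≤ ENNReal.ofReal (C * x) → x ≤ B

/-- A family `{σ^n_ρ}` is completely super linear if there is `n₀ ≥ 3` such that
`σ^{n₀}_ρ` is completely super linear for every `ρ ∈ (0,1]`. -/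
def FamilyCSL (σ : ℕ → ℝ → ℝ → ℝ≥0∞) : Prop :=
  ∃ n₀ : ℕ, 3 ≤ n₀ ∧ ∀ ρ : ℝ, 0 < ρ → ρ ≤ 1 → CompletelySuperLinear (σ n₀ ρ)

/-- `f` is dominated by `g` : `f(x) ≤ A g(Bx) + Cx` for all `x > D`. -/
def FunDominatedBy (f g : ℝ → ℝ≥0∞) : Prop :=
  ∃ A B C D : ℝ, 0 < A ∧ 0 < B ∧ 0 < C ∧ 0 < D ∧
    ∀ x : ℝ, D < x → f x ≤ ENNReal.ofReal A * g (B * x) + ENNReal.ofReal (C * x)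

/-- The quadratic function `r ↦ r²` viewed in `[0,∞]`. -/
def quadFun : ℝ → ℝ≥0∞ := fun r => ENNReal.ofReal (r ^ 2)

/-- The family `{σ^n_ρ}` dominates the function `f` (i.e. the constant family `f` is
dominated by `{σ^n_ρ}`): there are `L ∈ (0,1]` and a positive integer `M` such that
`f ≼ σ^{Mn}_ρ` for all `n ≥ 2`, `ρ ∈ (0,1]`. -/
def FamilyDominatesFun (σ : ℕ → ℝ → ℝ → ℝ≥0∞) (f : ℝ → ℝ≥0∞) : Prop :=
  ∃ (L : ℝ) (M : ℕ), 0 < L ∧ L ≤ 1 ∧ 0 < M ∧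
    ∀ n : ℕ, 2 ≤ n → ∀ ρ : ℝ, 0 < ρ → ρ ≤ 1 → FunDominatedBy f (σ (M * n) ρ)

/-- The family `{σ^n_ρ}` is dominated by the function `f`: there are `L ∈ (0,1]` and a
positive integer `M` such that `σ^n_{Lρ} ≼ f` for all `n ≥ 2`, `ρ ∈ (0,1]`. -/
def FamilyDominatedByFun (σ : ℕ → ℝ → ℝ → ℝ≥0∞) (f : ℝ → ℝ≥0∞) : Prop :=
  ∃ (L : ℝ) (M : ℕ), 0 < L ∧ L ≤ 1 ∧ 0 < M ∧
    ∀ n : ℕ, 2 ≤ n → ∀ ρ : ℝ, 0 < ρ → ρ ≤ 1 → FunDominatedBy (σ n (L * ρ)) f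

/-- The family is at least quadratic. -/
def FamilyAtLeastQuadratic (σ : ℕ → ℝ → ℝ → ℝ≥0∞) : Prop :=
  FamilyDominatesFun σ quadFun

/-- The family is (exactly) quadratic. -/
def FamilyQuadratic (σ : ℕ → ℝ → ℝ → ℝ≥0∞) : Prop :=
  FamilyDominatesFun σ quadFun ∧ FamilyDominatedByFun σ quadFun

/-- Word length of `g` with respect to a generating set `S` (letters from `S ∪ S⁻¹`). -/
def wordLength {G : Type*} [Group G] (S : Set G) (g : G) : ℕ :=
  sInf {n : ℕ | ∃ w : List G, w.length = n ∧ (∀ x ∈ w, x ∈ S ∨ x⁻¹ ∈ S) ∧ w.prod = g}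

/-- The word metric on `G` with respect to `S`. -/
def wordDist {G : Type*} [Group G] (S : Set G) (g h : G) : ℝ :=
  (wordLength S (g⁻¹ * h) : ℝ)

/-- The distance `d_S(g, A)` from `g` to a subset `A ⊆ G` in the word metric. -/
def wordDistToSet {G : Type*} [Group G] (S : Set G) (g : G) (A : Set G) : ℕ :=
  sInf {n : ℕ | ∃ a ∈ A, wordLength S (g⁻¹ * a) = n}

/-- `X`, together with the vertex map `ι : G → X`, is a geometric model for the Cayley
graph `Γ(G,S)`: `X` is geodesic, `ι` realizes the word metric on the vertex set, and every
point of `X` is within `1/2` of a vertex (as in the unit-edge-length Cayley graph). -/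
def CayleyModel (G : Type*) [Group G] (S : Set G) (X : Type*) [MetricSpace X]
    (ι : G → X) : Prop :=
  IsGeodesicSpace X ∧ (∀ g h : G, dist (ι g) (ι h) = wordDist S g h) ∧
    ∀ x : X, ∃ g : G, dist x (ι g) ≤ 1 / 2

/-- `H ≤ G` is strongly quasiconvex: `H` is a Morse subset of the Cayley graph of `G`
with respect to some (equivalently, any) finite generating set. -/
def StronglyQuasiconvex {G : Type*} [Group G] (H : Subgroup G) : Prop :=
  ∀ S : Set G, S.Finite → Subgroup.closure S = ⊤ →
    ∀ (X : Type) [MetricSpace X], ∀ ι : G → X, CayleyModel G S X ι →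
      IsMorse (ι '' (H : Set G))

/-- `H` is a finitely generated undistorted subgroup of `G` (with respect to the word
metric of the finite generating set `S` of `G`): the inclusion `(H,d_T) → (G,d_S)` is a
quasi-isometric embedding for some finite generating set `T` of `H`. -/
def Undistorted {G : Type*} [Group G] (S : Set G) (H : Subgroup G) : Prop :=
  ∃ T : Set H, T.Finite ∧ Subgroup.closure T = ⊤ ∧
    ∃ K L : ℝ, 1 ≤ K ∧ 0 ≤ L ∧ ∀ h₁ h₂ : H,
      (1 / K) * wordDist T h₁ h₂ - L ≤ wordDist S (h₁ : G) (h₂ : G) ∧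
      wordDist S (h₁ : G) (h₂ : G) ≤ K * wordDist T h₁ h₂ + L

/-- `H` is a stable subgroup of `G`: `H` is finitely generated and undistorted, and its
image in (a model `X` of) the Cayley graph `Γ(G,S)` is a stable subset. -/
def StableIn {G : Type*} [Group G] (S : Set G) (H : Subgroup G) (X : Type*)
    [MetricSpace X] (ι : G → X) : Prop :=
  Undistorted S H ∧ IsStableSubset (ι '' (H : Set G))

/-- A group is hyperbolic if its Cayley graph with respect to some (equivalently, any)
finite generating set is a hyperbolic geodesic space. -/
def IsHyperbolicGroup (H : Type*) [Group H] : Prop :=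
  ∀ T : Set H, T.Finite → Subgroup.closure T = ⊤ →
    ∀ (Y : Type) [MetricSpace Y], ∀ ι : H → Y, CayleyModel H T Y ι → IsHyperbolic Y

/-- A geodesic ray in `X` (isometric embedding of `[0,∞)`). -/
def IsGeodesicRay {X : Type*} [MetricSpace X] (γ : ℝ → X) : Prop :=
  ∀ s ∈ Ici (0 : ℝ), ∀ t ∈ Ici (0 : ℝ), dist (γ s) (γ t) = |s - t|

/-- `γ` restricted to `[a,b]` is a geodesic (isometric parametrization). -/
def IsGeodesicOn {X : Type*} [MetricSpace X] (γ : ℝ → X) (a b : ℝ) : Prop :=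
  ∀ s ∈ Icc a b, ∀ t ∈ Icc a b, dist (γ s) (γ t) = |s - t|

/-- `γ` is parametrized by arc length on `[a,b]`. -/
def ArcLengthParamOn {X : Type*} [MetricSpace X] (γ : ℝ → X) (a b : ℝ) : Prop :=
  ∀ s t : ℝ, a ≤ s → s ≤ t → t ≤ b → eVariationOn γ (Icc s t) = ENNReal.ofReal (t - s)

/-- Relations of a right-angled Coxeter group on a simplicial graph `Γ`. -/
def racgRels {V : Type} (Γ : SimpleGraph V) : Set (FreeGroup V) :=
  {rel | (∃ v : V, rel = FreeGroup.of v * FreeGroup.of v) ∨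
    (∃ v w : V, Γ.Adj v w ∧
      rel = FreeGroup.of v * FreeGroup.of w * (FreeGroup.of v)⁻¹ * (FreeGroup.of w)⁻¹)}

/-- The right-angled Coxeter group associated to a finite simplicial graph `Γ`. -/
abbrev RACG {V : Type} (Γ : SimpleGraph V) : Type := PresentedGroup (racgRels Γ)

/-- The standard generator of `RACG Γ` corresponding to a vertex. -/
def racgGen {V : Type} (Γ : SimpleGraph V) (v : V) : RACG Γ := PresentedGroup.of v

/-- Relations of a right-angled Artin group on a simplicial graph `Γ`. -/
def raagRels {V : Type} (Γ : SimpleGraph V) : Set (FreeGroup V) :=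
  {rel | ∃ v w : V, Γ.Adj v w ∧
    rel = FreeGroup.of v * FreeGroup.of w * (FreeGroup.of v)⁻¹ * (FreeGroup.of w)⁻¹}

/-- The right-angled Artin group associated to a finite simplicial graph `Γ`. -/
abbrev RAAG {V : Type} (Γ : SimpleGraph V) : Type := PresentedGroup (raagRels Γ)

/-- The standard generator of `RAAG Γ` corresponding to a vertex. -/
def raagGen {V : Type} (Γ : SimpleGraph V) (v : V) : RAAG Γ := PresentedGroup.of v

/-- `a b c d` (in this cyclic order) form an induced `4`-cycle of `Γ`. -/
def InducedFourCycle {V : Type} (Γ : SimpleGraph V) (a b c d : V) : Prop :=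
  a ≠ b ∧ a ≠ c ∧ a ≠ d ∧ b ≠ c ∧ b ≠ d ∧ c ≠ d ∧
  Γ.Adj a b ∧ Γ.Adj b c ∧ Γ.Adj c d ∧ Γ.Adj d a ∧ ¬ Γ.Adj a c ∧ ¬ Γ.Adj b d

/-! ### Word metrics -/

/-- An integer-valued metric in which distances are realized by paths of unit steps, that is,
the vertex metric of a connected graph. -/
structure IsGraphDist {V : Type*} (d : V → V → ℕ) : Prop where
  self : ∀ x, d x x = 0
  eq_of_zero : ∀ x y, d x y = 0 → x = y
  symm : ∀ x y, d x y = d y x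
  tri : ∀ x y z, d x z ≤ d x y + d y z
  step : ∀ x y n, d x y = n + 1 → ∃ z, d x z = n ∧ d z y = 1

/-- The word metric as a natural number. -/
def gdist {G : Type*} [Group G] (S : Set G) (x y : G) : ℕ := wordLength S (x⁻¹ * y)

section Word

variable {G : Type*} [Group G] {S : Set G}

lemma wordLength_prod_le {w : List G} (hw : ∀ x ∈ w, x ∈ S ∨ x⁻¹ ∈ S) :
    wordLength S w.prod ≤ w.length :=
  Nat.sInf_le ⟨w, rfl, hw, rfl⟩

lemma exists_min_word (hgen : Subgroup.closure S = ⊤) (g : G) :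
    ∃ w : List G, w.length = wordLength S g ∧ (∀ x ∈ w, x ∈ S ∨ x⁻¹ ∈ S) ∧ w.prod = g := by
  have hg : g ∈ Subgroup.closure S := by rw [hgen]; trivial
  rw [← Subgroup.mem_toSubmonoid, Subgroup.closure_toSubmonoid] at hg
  obtain ⟨w, hw, hp⟩ := Submonoid.exists_list_of_mem_closure hg
  exact Nat.sInf_mem (s := {n : ℕ | ∃ w : List G, w.length = n ∧
    (∀ x ∈ w, x ∈ S ∨ x⁻¹ ∈ S) ∧ w.prod = g}) ⟨_, w, rfl, hw, hp⟩

lemma wordLength_one : wordLength S (1 : G) = 0 := by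
  simpa using wordLength_prod_le (S := S) (w := []) (by simp)

lemma wordLength_mul_le (hgen : Subgroup.closure S = ⊤) (g h : G) :
    wordLength S (g * h) ≤ wordLength S g + wordLength S h := by
  obtain ⟨w, hl, hw, rfl⟩ := exists_min_word hgen g
  obtain ⟨v, hl', hv, rfl⟩ := exists_min_word hgen h
  rw [← hl, ← hl', ← List.prod_append, ← List.length_append]
  apply wordLength_prod_le
  intro x hx
  rcases List.mem_append.1 hx with h | h
  · exact hw x h
  · exact hv x h

lemma wordLength_inv_le (hgen : Subgroup.closure S = ⊤) (g : G) :
    wordLength S g⁻¹ ≤ wordLength S g := by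
  obtain ⟨w, hl, hw, rfl⟩ := exists_min_word hgen g
  rw [← hl, List.prod_inv_reverse]
  refine (wordLength_prod_le ?_).trans (by simp)
  intro x hx
  simp only [List.mem_reverse, List.mem_map] at hx
  obtain ⟨y, hy, rfl⟩ := hx
  rw [inv_inv]
  exact (hw y hy).symm

lemma gdist_tri (hgen : Subgroup.closure S = ⊤) (x y z : G) :
    gdist S x z ≤ gdist S x y + gdist S y z := by
  have := wordLength_mul_le hgen (x⁻¹ * y) (y⁻¹ * z)
  simpa [gdist, mul_assoc] using this

lemma gdist_isGraphDist (hgen : Subgroup.closure S = ⊤) : IsGraphDist (gdist S) where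
  self x := by simp [gdist, wordLength_one]
  eq_of_zero x y h := by
    obtain ⟨w, hl, -, hp⟩ := exists_min_word hgen (x⁻¹ * y)
    rw [show wordLength S (x⁻¹ * y) = 0 from h, List.length_eq_zero_iff] at hl
    subst hl
    exact (inv_mul_eq_one.1 hp.symm)
  symm x y := by
    have h1 := wordLength_inv_le hgen (x⁻¹ * y)
    have h2 := wordLength_inv_le hgen (y⁻¹ * x)
    simp only [mul_inv_rev, inv_inv] at h1 h2
    exact le_antisymm h2 h1
  tri := gdist_tri hgen
  step x y n h := by
    obtain ⟨w, hl, hw, hp⟩ := exists_min_word hgen (x⁻¹ * y)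
    rw [show wordLength S (x⁻¹ * y) = n + 1 from h] at hl
    rcases List.eq_nil_or_concat w with rfl | ⟨v, s, rfl⟩
    · simp at hl
    simp only [List.concat_eq_append, List.length_append, List.length_singleton,
      List.prod_append, List.prod_singleton, List.mem_append, List.mem_singleton] at hl hw hp
    have h1 : gdist S x (x * v.prod) ≤ n := by
      have := wordLength_prod_le (S := S) (w := v) (fun a ha => hw a (Or.inl ha))
      simp only [gdist, inv_mul_cancel_left]
      omega
    have h2 : gdist S (x * v.prod) y ≤ 1 := by
      have := wordLength_prod_le (S := S) (w := [s])
        (fun a ha => hw a (Or.inr (by simpa using ha)))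
      have e : (x * v.prod)⁻¹ * y = s := by
        rw [mul_inv_rev, mul_assoc, ← hp, inv_mul_cancel_left]
      rw [List.prod_singleton] at this
      simpa only [gdist, e, List.length_singleton] using this
    have h3 := gdist_tri hgen x (x * v.prod) y
    exact ⟨x * v.prod, by omega, by omega⟩

lemma gdist_mul_left (g x y : G) : gdist S (g * x) (g * y) = gdist S x y := by
  simp [gdist, mul_assoc]

lemma finite_ball (hS : S.Finite) (hgen : Subgroup.closure S = ⊤) (n : ℕ) :
    {g : G | wordLength S g ≤ n}.Finite := by
  have hd := gdist_isGraphDist hgen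
  have key : ∀ g, gdist S 1 g = wordLength S g := by simp [gdist]
  have h1 : {g : G | wordLength S g = 1}.Finite := by
    refine (hS.union hS.inv).subset ?_
    intro g hg
    obtain ⟨w, hl, hw, hp⟩ := exists_min_word hgen g
    rw [show wordLength S g = 1 from hg, List.length_eq_one_iff] at hl
    obtain ⟨a, rfl⟩ := hl
    simp only [List.mem_singleton, forall_eq, List.prod_singleton] at hw hp
    subst hp
    simpa using hw
  induction n with
  | zero =>
    refine (Set.finite_singleton (1 : G)).subset ?_
    intro g hg
    have : gdist S 1 g = 0 := by rw [key]; exact Nat.le_zero.1 hg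
    exact (hd.eq_of_zero _ _ this).symm
  | succ n ih =>
    refine (ih.union (ih.mul h1)).subset ?_
    intro g hg
    rcases Nat.lt_or_ge (wordLength S g) (n + 1) with h | h
    · exact Or.inl (Nat.lt_succ_iff.1 h)
    · obtain ⟨z, hz, hz'⟩ := hd.step 1 g n (by rw [key]; exact le_antisymm hg h)
      refine Or.inr (Set.mem_mul.2 ⟨z, ?_, z⁻¹ * g, hz', by simp⟩)
      rw [key] at hz
      exact hz.le

end Word

/-! ### The geometric realization of a graph -/

section Realization

variable {V : Type*} {d : V → V → ℕ}

/-- A point of the geometric realization of a graph, on the oriented edge from `a` to `b`, at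
distance `x` from `a`. Degenerate edges `a = b` of length zero are allowed and serve as vertices;
each geometric edge occurs with both orientations, as two distinct parallel edges. -/
structure EdgePt (d : V → V → ℕ) where
  a : V
  b : V
  x : ℝ
  edge : d a b ≤ 1
  nonneg : 0 ≤ x
  le : x ≤ d a b

namespace EdgePt

/-- The distance from a point to a vertex, leaving its edge through either end. -/
def foot (p : EdgePt d) (g : V) : ℝ := min (p.x + d p.a g) (d p.a p.b - p.x + d p.b g)

/-- The length of a shortest route from `p` to `q` through some vertex. -/
def route (p q : EdgePt d) : ℝ := ⨅ g, p.foot g + q.foot g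

open Classical in
/-- The path metric of the realization. -/
def pdist (p q : EdgePt d) : ℝ :=
  if p.a = q.a ∧ p.b = q.b then |p.x - q.x| else route p q

/-- A vertex, seen as a point of the realization. -/
def vtx (hd : IsGraphDist d) (v : V) : EdgePt d :=
  ⟨v, v, 0, by simp [hd.self], le_rfl, by positivity⟩

lemma foot_nonneg (p : EdgePt d) (g : V) : 0 ≤ p.foot g := by
  have := p.nonneg
  have := p.le
  exact le_min (by positivity) (by have : (0 : ℝ) ≤ d p.b g := by positivity
                                   linarith)

lemma route_le (p q : EdgePt d) (g : V) : route p q ≤ p.foot g + q.foot g :=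
  ciInf_le ⟨0, by rintro _ ⟨g, rfl⟩; exact add_nonneg (p.foot_nonneg g) (q.foot_nonneg g)⟩ g

lemma le_route (p q : EdgePt d) (c : ℝ) (h : ∀ g, c ≤ p.foot g + q.foot g) : c ≤ route p q :=
  haveI : Nonempty V := ⟨p.a⟩
  le_ciInf h

lemma route_comm (p q : EdgePt d) : route p q = route q p := by
  simp only [route, add_comm]

lemma foot_lip (hd : IsGraphDist d) (p : EdgePt d) (g k : V) : p.foot k ≤ p.foot g + d g k := by
  have h1 : (d p.a k : ℝ) ≤ d p.a g + d g k := by exact_mod_cast hd.tri _ _ _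
  have h2 : (d p.b k : ℝ) ≤ d p.b g + d g k := by exact_mod_cast hd.tri _ _ _
  unfold foot
  rcases min_cases (p.x + d p.a g) (d p.a p.b - p.x + d p.b g) with h' | h' <;> rw [h'.1]
  · exact (min_le_left _ _).trans (by linarith)
  · exact (min_le_right _ _).trans (by linarith)

lemma le_foot_add_foot (hd : IsGraphDist d) (p : EdgePt d) (g h : V) :
    (d g h : ℝ) ≤ p.foot g + p.foot h := by
  have h1 : (d g h : ℝ) ≤ d p.a g + d p.a h := by
    rw [hd.symm p.a g]; exact_mod_cast hd.tri _ _ _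
  have h2 : (d g h : ℝ) ≤ d p.b g + d p.b h := by
    rw [hd.symm p.b g]; exact_mod_cast hd.tri _ _ _
  have h3 : (d g h : ℝ) ≤ d p.a g + d p.a p.b + d p.b h := by
    rw [hd.symm p.a g]
    exact_mod_cast (hd.tri _ p.b _).trans (Nat.add_le_add_right (hd.tri _ _ _) _)
  have h4 : (d g h : ℝ) ≤ d p.b g + d p.a p.b + d p.a h := by
    rw [hd.symm p.b g, hd.symm p.a p.b]
    exact_mod_cast (hd.tri _ p.a _).trans (Nat.add_le_add_right (hd.tri _ _ _) _)
  have := p.nonneg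
  have := p.le
  unfold foot
  rcases min_cases (p.x + d p.a g) (d p.a p.b - p.x + d p.b g) with e | e <;>
  rcases min_cases (p.x + d p.a h) (d p.a p.b - p.x + d p.b h) with e' | e' <;>
  rw [e.1, e'.1] <;> linarith

lemma foot_le_of_same {p q : EdgePt d} (ha : p.a = q.a) (hb : p.b = q.b) (g : V) :
    p.foot g ≤ |p.x - q.x| + q.foot g := by
  have h1 := le_abs_self (p.x - q.x)
  have h2 := neg_abs_le (p.x - q.x)
  unfold foot
  rw [ha, hb]
  rcases min_cases (q.x + d q.a g) (d q.a q.b - q.x + d q.b g) with h | h <;> rw [h.1]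
  · exact (min_le_left _ _).trans (by linarith)
  · exact (min_le_right _ _).trans (by linarith)

/-- Leaving an edge and coming back is no shortcut, as both ends are at distance the length of
the edge. -/
lemma abs_le_route (hd : IsGraphDist d) {p q : EdgePt d} (ha : p.a = q.a) (hb : p.b = q.b) :
    |p.x - q.x| ≤ route p q := by
  refine le_route _ _ _ fun g => ?_
  have := p.nonneg
  have := p.le
  have := q.nonneg
  have := q.le
  have h3 : (d q.a q.b : ℝ) ≤ d q.a g + d q.b g := by
    rw [hd.symm q.b g]; exact_mod_cast hd.tri _ _ _
  have h4 : (0 : ℝ) ≤ d q.a g := by positivity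
  have h5 : (0 : ℝ) ≤ d q.b g := by positivity
  unfold foot
  rw [ha, hb] at *
  rcases min_cases (p.x + d q.a g) (d q.a q.b - p.x + d q.b g) with h | h <;>
  rcases min_cases (q.x + d q.a g) (d q.a q.b - q.x + d q.b g) with h' | h' <;>
  rw [h.1, h'.1] <;> refine abs_le.2 ⟨?_, ?_⟩ <;> linarith

lemma route_tri (hd : IsGraphDist d) (p q r : EdgePt d) : route p r ≤ route p q + route q r := by
  have h1 : ∀ g h, route p r ≤ p.foot g + q.foot g + (q.foot h + r.foot h) := fun g h => by
    have := route_le p r g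
    have := foot_lip hd r h g
    have := le_foot_add_foot hd q g h
    rw [hd.symm g h] at this
    linarith
  have h2 : ∀ g, route p r - (p.foot g + q.foot g) ≤ route q r := fun g =>
    le_route _ _ _ fun h => by linarith [h1 g h]
  have h3 : route p r - route q r ≤ route p q := le_route _ _ _ fun g => by linarith [h2 g]
  linarith

lemma route_le_of_same {p q : EdgePt d} (ha : p.a = q.a) (hb : p.b = q.b) (r : EdgePt d) :
    route p r ≤ |p.x - q.x| + route q r := by
  have : route p r - |p.x - q.x| ≤ route q r := le_route _ _ _ fun g => by
    have := route_le p r g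
    have := foot_le_of_same ha hb g
    linarith
  linarith

lemma pdist_comm (p q : EdgePt d) : pdist p q = pdist q p := by
  unfold pdist
  rw [route_comm, abs_sub_comm]
  split_ifs with h1 h2 h2
  · rfl
  · exact absurd ⟨h1.1.symm, h1.2.symm⟩ h2
  · exact absurd ⟨h2.1.symm, h2.2.symm⟩ h1
  · rfl

lemma pdist_tri (hd : IsGraphDist d) (p q r : EdgePt d) :
    pdist p r ≤ pdist p q + pdist q r := by
  unfold pdist
  by_cases h1 : p.a = q.a ∧ p.b = q.b
  · by_cases h2 : q.a = r.a ∧ q.b = r.b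
    · rw [if_pos h1, if_pos h2, if_pos ⟨h1.1.trans h2.1, h1.2.trans h2.2⟩]
      exact abs_sub_le _ _ _
    · have h3 : ¬ (p.a = r.a ∧ p.b = r.b) := by rwa [h1.1, h1.2]
      rw [if_pos h1, if_neg h2, if_neg h3]
      exact route_le_of_same h1.1 h1.2 r
  · by_cases h2 : q.a = r.a ∧ q.b = r.b
    · have h3 : ¬ (p.a = r.a ∧ p.b = r.b) := by rwa [← h2.1, ← h2.2]
      rw [if_neg h1, if_pos h2, if_neg h3, route_comm p r, route_comm p q, abs_sub_comm, add_comm]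
      exact route_le_of_same h2.1.symm h2.2.symm p
    · rw [if_neg h1, if_neg h2]
      have := route_tri hd p q r
      split_ifs with h3
      · exact (abs_le_route hd h3.1 h3.2).trans this
      · exact this

lemma pdist_vtx (hd : IsGraphDist d) (p : EdgePt d) (v : V) : pdist p (vtx hd v) = p.foot v := by
  have hv : ∀ g, (vtx hd v).foot g = d v g := fun g => by simp [foot, vtx, hd.self]
  have hpv := p.foot_nonneg v
  unfold pdist
  split_ifs with h
  · have ha : p.a = v := h.1
    have hb : p.b = v := h.2
    have h1 := p.nonneg
    have h2 := p.le
    rw [ha, hb, hd.self, Nat.cast_zero] at h2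
    have h3 : p.x = 0 := le_antisymm h2 h1
    simp [foot, vtx, h3, ha, hb, hd.self]
  · apply le_antisymm
    · simpa [hv, hd.self] using route_le p (vtx hd v) v
    · refine le_route _ _ _ fun g => ?_
      rw [hv, hd.symm]
      exact foot_lip hd p g v

lemma pdist_vtx_vtx (hd : IsGraphDist d) (u v : V) : pdist (vtx hd u) (vtx hd v) = d u v := by
  rw [pdist_vtx]
  simp [foot, vtx, hd.self]

lemma exists_ends (hd : IsGraphDist d) (p q : EdgePt d) :
    ∃ u v, p.foot u + d u v + q.foot v ≤ route p q := by
  by_contra! hcon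
  -- The end of its edge through which a point realizes its distance to `g`.
  have ends : ∀ (p : EdgePt d) (g : V), ∃ u, (u = p.a ∨ u = p.b) ∧ p.foot u + d u g ≤ p.foot g := by
    intro p g
    have h1 : p.foot p.a ≤ p.x := (min_le_left _ _).trans (by simp [hd.self])
    have h2 : p.foot p.b ≤ d p.a p.b - p.x := (min_le_right _ _).trans (by simp [hd.self])
    rcases min_cases (p.x + d p.a g) (d p.a p.b - p.x + d p.b g) with h | h
    · exact ⟨p.a, Or.inl rfl, by rw [show p.foot g = _ from h.1]; linarith⟩
    · exact ⟨p.b, Or.inr rfl, by rw [show p.foot g = _ from h.1]; linarith⟩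
  set F : V → V → ℝ := fun u v => p.foot u + d u v + q.foot v with hF
  have hle : min (min (F p.a q.a) (F p.a q.b)) (min (F p.b q.a) (F p.b q.b)) ≤ route p q := by
    refine le_route _ _ _ fun g => ?_
    obtain ⟨u, hu, hu'⟩ := ends p g
    obtain ⟨v, hv, hv'⟩ := ends q g
    have h3 : (d u v : ℝ) ≤ d u g + d v g := by
      rw [hd.symm v g]; exact_mod_cast hd.tri _ _ _
    have h4 : F u v ≤ p.foot g + q.foot g := by simp only [hF]; linarith
    refine le_trans ?_ h4
    rcases hu with rfl | rfl <;> rcases hv with rfl | rfl <;> simp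
  have := lt_min (lt_min (hcon p.a q.a) (hcon p.a q.b)) (lt_min (hcon p.b q.a) (hcon p.b q.b))
  exact absurd hle (not_le.2 this)

end EdgePt

/-- The pseudometric of the realization. -/
@[reducible] def edgePseudo (hd : IsGraphDist d) : PseudoMetricSpace (EdgePt d) where
  dist := EdgePt.pdist
  dist_self p := by simp [EdgePt.pdist]
  dist_comm := EdgePt.pdist_comm
  dist_triangle := EdgePt.pdist_tri hd

/-- Two points are joined by a geodesic, given as a distance-realizing `1`-Lipschitz path. -/
def Joined1 {X : Type*} [MetricSpace X] (x y : X) : Prop :=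
  ∃ γ : ℝ → X, γ 0 = x ∧ γ (dist x y) = y ∧ ∀ s t, 0 ≤ s → s ≤ t → t ≤ dist x y →
    dist (γ s) (γ t) ≤ t - s

section Joined

variable {X : Type*} [MetricSpace X]

lemma Joined1.refl (x : X) : Joined1 x x :=
  ⟨fun _ => x, rfl, rfl, fun s t _ h _ => by simpa using h⟩

lemma Joined1.symm {x y : X} (h : Joined1 x y) : Joined1 y x := by
  obtain ⟨γ, h0, h1, h2⟩ := h
  refine ⟨fun t => γ (dist x y - t), ?_, ?_, ?_⟩
  · simpa using h1
  · simpa [dist_comm y x] using h0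
  · intro s t hs hst ht
    rw [dist_comm y x] at ht
    rw [dist_comm]
    exact (h2 (dist x y - t) (dist x y - s) (by linarith) (by linarith) (by linarith)).trans
      (by linarith)

lemma Joined1.trans {x y z : X} (h : Joined1 x y) (h' : Joined1 y z)
    (hd : dist x y + dist y z ≤ dist x z) : Joined1 x z := by
  obtain ⟨γ, h0, h1, h2⟩ := h
  obtain ⟨η, k0, k1, k2⟩ := h'
  have hxz : dist x z = dist x y + dist y z := le_antisymm (dist_triangle _ _ _) hd
  have hxy : 0 ≤ dist x y := dist_nonneg
  have hyz : 0 ≤ dist y z := dist_nonneg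
  have e1 : ∀ t, dist x y ≤ t →
      (if t ≤ dist x y then γ t else η (t - dist x y)) = η (t - dist x y) := by
    intro t ht
    split_ifs with h
    · have : t = dist x y := le_antisymm h ht
      rw [this, h1, sub_self, k0]
    · rfl
  refine ⟨fun t => if t ≤ dist x y then γ t else η (t - dist x y), ?_, ?_, ?_⟩
  · simp [hxy, h0]
  · simp only
    rw [hxz, e1 _ (by linarith)]
    simpa using k1
  · intro s t hs hst ht
    rw [hxz] at ht
    simp only
    rcases le_total t (dist x y) with h | h
    · rw [if_pos h, if_pos (hst.trans h)]
      exact h2 s t hs hst h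
    · rw [e1 t h]
      rcases le_total s (dist x y) with h' | h'
      · rw [if_pos h']
        have a1 := h2 s (dist x y) hs h' le_rfl
        have a2 := k2 0 (t - dist x y) le_rfl (by linarith) (by linarith)
        rw [h1] at a1
        rw [k0] at a2
        linarith [dist_triangle (γ s) y (η (t - dist x y))]
      · rw [e1 s h']
        exact (k2 _ _ (by linarith) (by linarith) (by linarith)).trans (by linarith)

lemma isGeodesicSpace_of_joined (h : ∀ x y : X, Joined1 x y) : IsGeodesicSpace X := by
  intro x y
  obtain ⟨γ, h0, h1, h2⟩ := h x y
  -- A `1`-Lipschitz path realizing the distance of its ends is isometric.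
  have key : ∀ s t, 0 ≤ s → s ≤ t → t ≤ dist x y → dist (γ s) (γ t) = t - s := by
    intro s t hs hst ht
    have a1 := h2 0 s le_rfl hs (hst.trans ht)
    have a2 := h2 s t hs hst ht
    have a3 := h2 t _ (hs.trans hst) ht le_rfl
    rw [h0] at a1
    rw [h1] at a3
    linarith [dist_triangle4 x (γ s) (γ t) y]
  refine ⟨γ, h0, h1, fun s hs t ht => ?_⟩
  rcases le_total s t with h | h
  · rw [key s t hs.1 h ht.2, abs_sub_comm, abs_of_nonneg (by linarith)]
  · rw [dist_comm, key t s ht.1 h hs.2, abs_of_nonneg (by linarith)]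

end Joined

/-- Every graph metric on a type in the lowest universe is the vertex metric of a geodesic space
in which vertices are `1/2`-dense. -/
lemma exists_realization {V : Type} {d : V → V → ℕ} (hd : IsGraphDist d) :
    ∃ (X : Type) (_ : MetricSpace X) (ι : V → X), IsGeodesicSpace X ∧
      (∀ u v, dist (ι u) (ι v) = d u v) ∧ ∀ x, ∃ v, dist x (ι v) ≤ 1 / 2 := by
  let _ := edgePseudo hd
  let mk : EdgePt d → SeparationQuotient (EdgePt d) := SeparationQuotient.mk
  have hmk : ∀ p q : EdgePt d, dist (mk p) (mk q) = EdgePt.pdist p q := fun p q =>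
    SeparationQuotient.dist_mk p q
  have hsurj : ∀ x, ∃ p, mk p = x := SeparationQuotient.surjective_mk
  obtain ⟨ι, hι⟩ : ∃ ι : V → SeparationQuotient (EdgePt d), ∀ v, ι v = mk (EdgePt.vtx hd v) :=
    ⟨_, fun _ => rfl⟩
  have hvert : ∀ u v, dist (ι u) (ι v) = d u v := fun u v => by
    rw [hι, hι, hmk, EdgePt.pdist_vtx_vtx]
  have hfoot : ∀ p v, dist (mk p) (ι v) = p.foot v := fun p v => by
    rw [hι, hmk, EdgePt.pdist_vtx]
  -- Points of one edge are joined along it.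
  have same : ∀ p q : EdgePt d, p.a = q.a → p.b = q.b → Joined1 (mk p) (mk q) := by
    have aux : ∀ p q : EdgePt d, p.a = q.a → p.b = q.b → p.x ≤ q.x → Joined1 (mk p) (mk q) := by
      rintro ⟨a, b, x, he, hx, hx'⟩ ⟨a', b', y, he', hy, hy'⟩ rfl rfl hxy
      simp only at hxy
      have hdist : dist (mk ⟨a, b, x, he, hx, hx'⟩) (mk ⟨a, b, y, he', hy, hy'⟩) = y - x := by
        rw [hmk, EdgePt.pdist, if_pos ⟨rfl, rfl⟩, abs_sub_comm, abs_of_nonneg (by simpa using hxy)]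
      have h0 : (0 : ℝ) ≤ d a b := by positivity
      refine ⟨fun t => mk ⟨a, b, max 0 (min (d a b) (x + t)), he, le_max_left _ _,
        max_le h0 (min_le_left _ _)⟩, ?_, ?_, ?_⟩
      · simp [hx, hx']
      · rw [hdist]
        simp [hy, hy']
      · intro s t hs hst ht
        rw [hdist] at ht
        rw [hmk, EdgePt.pdist, if_pos ⟨rfl, rfl⟩]
        simp only
        rw [min_eq_right (by linarith), min_eq_right (by linarith), max_eq_right (by linarith),
          max_eq_right (by linarith), abs_le]
        constructor <;> linarith
    intro p q ha hb
    rcases le_total p.x q.x with h | h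
    · exact aux p q ha hb h
    · exact (aux q p ha.symm hb.symm h).symm
  have toEnd : ∀ (p : EdgePt d) (u : V), u = p.a ∨ u = p.b → Joined1 (mk p) (ι u) := by
    intro p u hu
    rcases hu with rfl | rfl
    · have : ι p.a = mk ⟨p.a, p.b, 0, p.edge, le_rfl, by positivity⟩ := by
        rw [eq_comm, ← dist_eq_zero, hfoot]
        simp [EdgePt.foot, hd.self]
        positivity
      rw [this]
      exact same _ _ rfl rfl
    · have : ι p.b = mk ⟨p.a, p.b, d p.a p.b, p.edge, by positivity, le_rfl⟩ := by
        rw [eq_comm, ← dist_eq_zero, hfoot]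
        simp only [EdgePt.foot, hd.self]
        rw [min_eq_right]
        · simp
        · simp
      rw [this]
      exact same _ _ rfl rfl
  have vv : ∀ n u v, d u v = n → Joined1 (ι u) (ι v) := by
    intro n
    induction n with
    | zero => intro u v h; rw [hd.eq_of_zero u v h]; exact Joined1.refl _
    | succ n ih =>
      intro u v h
      obtain ⟨z, hz, hz'⟩ := hd.step u v n h
      have hzv : Joined1 (ι z) (ι v) := by
        have h1 := toEnd ⟨z, v, 0, hz'.le, le_rfl, by positivity⟩ v (Or.inr rfl)
        have : ι z = mk ⟨z, v, 0, hz'.le, le_rfl, by positivity⟩ := by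
          rw [eq_comm, ← dist_eq_zero, hfoot]
          simp [EdgePt.foot, hd.self]
          positivity
        rwa [this]
      refine (ih u z hz).trans hzv ?_
      rw [hvert, hvert, hvert, hz, hz', h]
      push_cast
      exact le_rfl
  -- Any vertex is reached by leaving the edge through one of its ends.
  have toVert : ∀ (p : EdgePt d) (u : V), Joined1 (mk p) (ι u) := by
    intro p u
    have h1 : p.foot p.a ≤ p.x := (min_le_left _ _).trans (by simp [hd.self])
    have h2 : p.foot p.b ≤ d p.a p.b - p.x := (min_le_right _ _).trans (by simp [hd.self])
    rcases min_cases (p.x + d p.a u) (d p.a p.b - p.x + d p.b u) with h | h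
    · refine (toEnd p _ (Or.inl rfl)).trans (vv _ p.a u rfl) ?_
      rw [hfoot, hfoot, hvert, show p.foot u = _ from h.1]
      linarith
    · refine (toEnd p _ (Or.inr rfl)).trans (vv _ p.b u rfl) ?_
      rw [hfoot, hfoot, hvert, show p.foot u = _ from h.1]
      linarith
  refine ⟨SeparationQuotient (EdgePt d), inferInstance, ι, ?_, hvert, ?_⟩
  · refine isGeodesicSpace_of_joined fun x y => ?_
    obtain ⟨p, rfl⟩ := hsurj x
    obtain ⟨q, rfl⟩ := hsurj y
    by_cases h : p.a = q.a ∧ p.b = q.b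
    · exact same p q h.1 h.2
    · obtain ⟨u, v, huv⟩ := EdgePt.exists_ends hd p q
      have hpq : dist (mk p) (mk q) = EdgePt.route p q := by
        rw [hmk, EdgePt.pdist, if_neg h]
      have e2 : dist (ι v) (mk q) = q.foot v := by rw [dist_comm, hfoot]
      have h3 : Joined1 (ι u) (mk q) := by
        refine (vv _ u v rfl).trans (toVert q v).symm ?_
        have := dist_triangle (mk p) (ι u) (mk q)
        rw [hfoot, hpq] at this
        rw [hvert, e2]
        linarith
      refine (toVert p u).trans h3 ?_
      have := dist_triangle (ι u) (ι v) (mk q)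
      rw [hvert, e2] at this
      rw [hfoot, hpq]
      linarith
  · intro x
    obtain ⟨p, rfl⟩ := hsurj x
    have he : (d p.a p.b : ℝ) ≤ 1 := by exact_mod_cast p.edge
    rcases le_total p.x (1 / 2) with h | h
    · refine ⟨p.a, ?_⟩
      rw [hfoot]
      exact (min_le_left _ _).trans (by simpa [hd.self] using h)
    · refine ⟨p.b, ?_⟩
      rw [hfoot]
      exact (min_le_right _ _).trans (by rw [hd.self]; push_cast; linarith)

end Realization

/-! ### Discrete quasi-geodesics -/

section Paths

variable {V : Type*} {d : V → V → ℕ}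

/-- `w 0, …, w n` is a discrete `(K,C)`-quasi-geodesic, with multiplicative constant `1` in the
upper bound. -/
def QPath (d : V → V → ℕ) (K C n : ℕ) (w : ℕ → V) : Prop :=
  ∀ i j, i ≤ j → j ≤ n → j ≤ i + (K * d (w i) (w j) + C) ∧ d (w i) (w j) + i ≤ j + C

/-- `w 0, …, w n` is a discrete geodesic. -/
def Geo (d : V → V → ℕ) (n : ℕ) (w : ℕ → V) : Prop :=
  ∀ i j, i ≤ j → j ≤ n → d (w i) (w j) + i = j

lemma Geo.qpath {n : ℕ} {w : ℕ → V} (h : Geo d n w) : QPath d 1 0 n w := by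
  intro i j hij hj
  have := h i j hij hj
  omega

lemma Geo.rev (hd : IsGraphDist d) {n : ℕ} {w : ℕ → V} (h : Geo d n w) :
    Geo d n fun i => w (n - i) := by
  intro i j hij hj
  have := h (n - j) (n - i) (by omega) (by omega)
  rw [hd.symm] at this
  simp only
  omega

lemma Geo.sub {n : ℕ} {w : ℕ → V} (h : Geo d n w) (m k : ℕ) (hk : m + k ≤ n) :
    Geo d k fun i => w (m + i) := by
  intro i j hij hj
  have := h (m + i) (m + j) (by omega) (by omega)
  simp only
  omega

lemma exists_geo (hd : IsGraphDist d) (x y : V) :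
    ∃ w : ℕ → V, w 0 = x ∧ w (d x y) = y ∧ Geo d (d x y) w := by
  suffices H : ∀ n y, d x y = n → ∃ w : ℕ → V, w 0 = x ∧ w n = y ∧ Geo d n w from H _ y rfl
  intro n
  induction n with
  | zero =>
    intro y h
    refine ⟨fun _ => x, rfl, hd.eq_of_zero _ _ h, fun i j hij hj => ?_⟩
    have := hd.self x
    simp only
    omega
  | succ n ih =>
    intro y h
    obtain ⟨z, hz, hz'⟩ := hd.step x y n h
    obtain ⟨w, h0, h1, h2⟩ := ih z hz
    refine ⟨fun i => if i ≤ n then w i else y, by simp [h0], by simp, fun i j hij hj => ?_⟩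
    simp only
    by_cases hjn : j ≤ n
    · rw [if_pos hjn, if_pos (hij.trans hjn)]
      exact h2 i j hij hjn
    · obtain rfl : j = n + 1 := by omega
      rw [if_neg hjn]
      by_cases hi : i ≤ n
      · rw [if_pos hi]
        have a1 := h2 0 i (by omega) hi
        have a2 := h2 i n hi le_rfl
        rw [h0] at a1
        rw [h1] at a2
        have a3 := hd.tri (w i) z y
        have a4 := hd.tri x (w i) y
        omega
      · rw [if_neg hi, hd.self]
        omega

lemma exists_nearest (d : V → V → ℕ) (z : V) (w : ℕ → V) (n : ℕ) :
    ∃ m ≤ n, ∀ j ≤ n, d z (w m) ≤ d z (w j) := by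
  obtain ⟨m, hm, h⟩ :=
    Finset.exists_min_image (Finset.range (n + 1)) (fun i => d z (w i)) ⟨0, by simp⟩
  exact ⟨m, by simpa [Nat.lt_succ_iff] using hm,
    fun j hj => h j (by simpa [Nat.lt_succ_iff] using hj)⟩

/-- If `β 0` is a point of the geodesic `β` nearest to `z`, then passing from a geodesic
from `z` to `β 0` over to `β` saves at most two thirds of the length. -/
lemma elbow_dist (hd : IsGraphDist d) {z : V} {β τ : ℕ → V} {t : ℕ} (hβ : Geo d t β)
    (hmin : ∀ j ≤ t, d z (β 0) ≤ d z (β j)) (h0 : τ 0 = z) (h1 : τ (d z (β 0)) = β 0)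
    (hτ : Geo d (d z (β 0)) τ) {i j : ℕ} (hi : i ≤ d z (β 0)) (hj : j ≤ t) :
    d z (β 0) + j ≤ i + 3 * d (τ i) (β j) ∧ d (τ i) (β j) + i ≤ d z (β 0) + j := by
  have a1 := hτ 0 i (by omega) hi
  have a2 := hτ i _ hi le_rfl
  have a3 := hβ 0 j (by omega) hj
  have a4 := hmin j hj
  rw [h0] at a1
  rw [h1] at a2
  have a5 := hd.tri z (τ i) (β j)
  have a6 := hd.tri (β 0) (τ i) (β j)
  have a7 := hd.tri (τ i) (β 0) (β j)
  rw [hd.symm (β 0) (τ i)] at a6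
  omega

/-- A shortest path from `z` to a geodesic, continued along it, is a `(3,0)`-quasi-geodesic. -/
lemma exists_elbow (hd : IsGraphDist d) {z : V} {β : ℕ → V} {t : ℕ} (hβ : Geo d t β)
    (hmin : ∀ j ≤ t, d z (β 0) ≤ d z (β j)) :
    ∃ w, QPath d 3 0 (d z (β 0) + t) w ∧ w 0 = z ∧ ∀ j ≤ t, w (d z (β 0) + j) = β j := by
  obtain ⟨τ, h0, h1, hτ⟩ := exists_geo hd z (β 0)
  set p := d z (β 0) with hp
  have e0 : ∀ i ≤ p, (if i ≤ p then τ i else β (i - p)) = τ i := fun i hi => if_pos hi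
  have e1 : ∀ j, (if p + j ≤ p then τ (p + j) else β (p + j - p)) = β j := by
    intro j
    split_ifs with h
    · obtain rfl : j = 0 := by omega
      exact h1
    · congr 1; omega
  refine ⟨fun i => if i ≤ p then τ i else β (i - p), ?_, ?_, fun j _ => e1 j⟩
  · intro i j hij hj
    simp only
    rcases le_total j p with h | h
    · rw [e0 j h, e0 i (hij.trans h)]
      have := hτ i j hij h
      omega
    · obtain ⟨j, rfl⟩ := Nat.exists_eq_add_of_le h
      rw [e1]
      rcases le_total i p with h' | h'
      · rw [e0 i h']
        have := elbow_dist hd hβ hmin h0 h1 hτ h' (j := j) (by omega)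
        omega
      · obtain ⟨i, rfl⟩ := Nat.exists_eq_add_of_le h'
        rw [e1]
        have := hβ i j (by omega) (by omega)
        omega
  · simpa using h0

/-- A geodesic that is long compared with the distances from its ends to `x` and `y`, where these
ends are nearest to `x` and `y`, extends to a `(3,0)`-quasi-geodesic from `x` to `y`. -/
lemma exists_bridge (hd : IsGraphDist d) {x y : V} {σ : ℕ → V} {L : ℕ} (hσ : Geo d L σ)
    (hx : ∀ j ≤ L, d x (σ 0) ≤ d x (σ j)) (hy : ∀ j ≤ L, d y (σ L) ≤ d y (σ j))
    (hL : 2 * (d x (σ 0) + d y (σ L)) ≤ L) :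
    ∃ w, QPath d 3 0 (d x (σ 0) + L + d y (σ L)) w ∧ w 0 = x ∧
      w (d x (σ 0) + L + d y (σ L)) = y ∧ ∀ j ≤ L, w (d x (σ 0) + j) = σ j := by
  obtain ⟨w, hw, hw0, hwσ⟩ := exists_elbow hd hσ hx
  obtain ⟨τ, h0, h1, hτ⟩ := exists_geo hd y (σ L)
  set p := d x (σ 0) with hp
  set q := d y (σ L) with hq
  have hσ' := hσ.rev hd
  have e0 : ∀ i ≤ p + L, (if i ≤ p + L then w i else τ (p + L + q - i)) = w i :=
    fun i hi => if_pos hi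
  have e1 : ∀ s, s ≤ q → (if p + L + s ≤ p + L then w (p + L + s) else
      τ (p + L + q - (p + L + s))) = τ (q - s) := by
    intro s hs
    split_ifs with h
    · obtain rfl : s = 0 := by omega
      simpa [h1] using hwσ L le_rfl
    · congr 1; omega
  refine ⟨fun i => if i ≤ p + L then w i else τ (p + L + q - i), ?_, ?_, ?_, ?_⟩
  · intro i j hij hj
    simp only
    rcases le_total j (p + L) with h | h
    · rw [e0 j h, e0 i (hij.trans h)]
      exact hw i j hij h
    obtain ⟨s, rfl⟩ := Nat.exists_eq_add_of_le h
    rw [e1 s (by omega)]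
    rcases le_total i (p + L) with h' | h'
    · rw [e0 i h']
      rcases le_total p i with h'' | h''
      · obtain ⟨k, rfl⟩ := Nat.exists_eq_add_of_le h''
        rw [hwσ k (by omega), hd.symm]
        have := elbow_dist hd (z := y) (τ := τ) hσ' (fun j _ => by simpa using hy (L - j) (by omega))
          h0 (by simpa using h1) (by simpa using hτ) (i := q - s) (j := L - k)
          (by simp [← hq]) (by omega)
        simp only [Nat.sub_zero, ← hq, show L - (L - k) = k by omega] at this
        omega
      · -- The two detours are short compared with the geodesic between them.
        have a1 := (hw i p h'' (by omega)).2
        have a2 := hτ (q - s) q (by omega) le_rfl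
        have a3 := hσ 0 L (by omega) le_rfl
        have a0 := hwσ 0 (by omega)
        rw [Nat.add_zero] at a0
        rw [a0] at a1
        rw [h1] at a2
        have a4 := hd.tri (σ 0) (w i) (σ L)
        have a5 := hd.tri (w i) (τ (q - s)) (σ L)
        have a6 := hd.tri (w i) (σ 0) (τ (q - s))
        have a7 := hd.tri (σ 0) (σ L) (τ (q - s))
        rw [hd.symm (σ 0) (w i)] at a4
        rw [hd.symm (σ L) (τ _)] at a7
        omega
    · obtain ⟨k, rfl⟩ := Nat.exists_eq_add_of_le h'
      rw [e1 k (by omega), hd.symm]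
      have := hτ (q - s) (q - k) (by omega) (by omega)
      omega
  · simpa using hw0
  · simp only
    rw [e1 q le_rfl, Nat.sub_self, h0]
  · intro j hj
    simp only
    rw [e0 _ (by omega)]
    exact hwσ j hj

end Paths

/-! ### Neighborhoods of left cosets -/

section Cosets

variable {G : Type*} [Group G] {S : Set G} {H : Subgroup G}

/-- The point `p` lies in the `r`-neighborhood of the coset `gH`. -/
def Near (S : Set G) (H : Subgroup G) (r : ℕ) (p g : G) : Prop :=
  ∃ h ∈ H, gdist S p (g * h) ≤ r

lemma Near.mono {r s : ℕ} {p g : G} (h : Near S H r p g) (hrs : r ≤ s) : Near S H s p g := by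
  obtain ⟨a, ha, hr⟩ := h
  exact ⟨a, ha, hr.trans hrs⟩

/-- All left cosets of `H` are Morse for discrete quasi-geodesics, with a common gauge; the ends
of the quasi-geodesics are only required to be close to the coset. -/
def UMorse (S : Set G) (H : Subgroup G) : Prop :=
  ∀ K C R : ℕ, ∃ M : ℕ, ∀ (g : G) (n : ℕ) (w : ℕ → G), QPath (gdist S) K C n w →
    Near S H R (w 0) g → Near S H R (w n) g → ∀ i ≤ n, Near S H M (w i) g

lemma exists_cayleyModel (hS : S.Finite) (hgen : Subgroup.closure S = ⊤) :
    ∃ (X : Type) (_ : MetricSpace X) (ι : G → X), CayleyModel G S X ι := by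
  have hd := gdist_isGraphDist hgen
  -- A finitely generated group is countable, hence has a copy in the lowest universe.
  have hc : Countable G := by
    rw [← Set.countable_univ_iff]
    refine (Set.countable_iUnion fun n : ℕ => (finite_ball hS hgen n).countable).mono ?_
    intro g _
    exact Set.mem_iUnion.2 ⟨wordLength S g, le_refl (wordLength S g)⟩
  let e := equivShrink.{0} G
  have hd' : IsGraphDist fun u v => gdist S (e.symm u) (e.symm v) :=
    { self := fun x => hd.self _
      eq_of_zero := fun x y h => e.symm.injective (hd.eq_of_zero _ _ h)
      symm := fun x y => hd.symm _ _
      tri := fun x y z => hd.tri _ _ _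
      step := fun x y n h => by
        obtain ⟨z, hz⟩ := hd.step _ _ n h
        exact ⟨e z, by simpa using hz⟩ }
  obtain ⟨X, _, ι, h1, h2, h3⟩ := exists_realization hd'
  refine ⟨X, _, fun g => ι (e g), h1, fun g h => ?_, fun x => ?_⟩
  · rw [h2]
    simp [wordDist, gdist]
  · obtain ⟨v, hv⟩ := h3 x
    exact ⟨e.symm v, by simpa using hv⟩

/-- The step function `t ↦ w ⌊t⌋`, moved onto the coset at its ends, is a quasi-geodesic of the
geodesic model, to which the Morse property applies. -/
lemma uMorse_of_stronglyQuasiconvex (hS : S.Finite) (hgen : Subgroup.closure S = ⊤)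
    (hsqc : StronglyQuasiconvex H) : UMorse S H := by
  have hd := gdist_isGraphDist hgen
  obtain ⟨X, _, ι, hX⟩ := exists_cayleyModel hS hgen
  have hmorse := hsqc S hS hgen X ι hX
  have hdist : ∀ g h, dist (ι g) (ι h) = gdist S g h := hX.2.1
  intro K C R
  set C0 : ℝ := 2 * K * R + C + 1 + 2 * R with hC0
  have hK0 : (0 : ℝ) ≤ K := by positivity
  have hR0 : (0 : ℝ) ≤ R := by positivity
  have hCn : (0 : ℝ) ≤ C := by positivity
  have hC0n : 0 ≤ C0 := by positivity
  obtain ⟨M, hM0, hM⟩ := hmorse (K + 1) C0 (by linarith) hC0n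
  refine ⟨⌈M⌉₊ + 1 + R, ?_⟩
  rintro g n w hw ⟨a, ha, haR⟩ ⟨b, hb, hbR⟩ i hi
  -- Moving the ends onto the coset changes distances by at most `2R`.
  obtain ⟨w', hw', hw0, hwn⟩ : ∃ w' : ℕ → G, (∀ i ≤ n, gdist S (w i) (w' i) ≤ R) ∧
      (∃ h ∈ H, w' 0 = g * h) ∧ ∃ h ∈ H, w' n = g * h := by
    refine ⟨fun i => if i = 0 then g * a else if i = n then g * b else w i, ?_, ⟨a, ha, by simp⟩, ?_⟩
    · intro i _
      simp only
      split_ifs with h1 h2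
      · rwa [h1]
      · rwa [h2]
      · rw [hd.self]; omega
    · by_cases h : n = 0
      · exact ⟨a, ha, by simp [h]⟩
      · exact ⟨b, hb, by simp [h]⟩
  have hq : ∀ i j, i ≤ j → j ≤ n → ((j : ℝ) ≤ i + (K * (gdist S (w' i) (w' j) + 2 * R) + C)) ∧
      (gdist S (w' i) (w' j) : ℝ) + i ≤ j + C + 2 * R := by
    intro i j hij hj
    obtain ⟨h1, h2⟩ := hw i j hij hj
    have a1 := hw' i (hij.trans hj)
    have a2 := hw' j hj
    have a3 := hd.tri (w i) (w' i) (w j)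
    have a4 := hd.tri (w' i) (w' j) (w j)
    have a5 := hd.tri (w' i) (w i) (w' j)
    have a6 := hd.tri (w i) (w j) (w' j)
    rw [hd.symm (w' j) (w j)] at a4
    rw [hd.symm (w' i) (w i)] at a5
    have a7 : gdist S (w i) (w j) ≤ gdist S (w' i) (w' j) + 2 * R := by omega
    have a8 := Nat.mul_le_mul_left K a7
    constructor
    · have : j ≤ i + (K * (gdist S (w' i) (w' j) + 2 * R) + C) := by omega
      exact_mod_cast this
    · have : gdist S (w' i) (w' j) + i ≤ j + C + 2 * R := by omega
      exact_mod_cast this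
  have hqi : QIEmbedOn (fun t : ℝ => ι (g⁻¹ * w' ⌊t⌋₊)) (Icc (0 : ℝ) n) (K + 1) C0 := by
    have main : ∀ s ∈ Icc (0 : ℝ) n, ∀ t ∈ Icc (0 : ℝ) n, s ≤ t →
        (1 / ((K : ℝ) + 1)) * |s - t| - C0 ≤ (gdist S (w' ⌊s⌋₊) (w' ⌊t⌋₊) : ℝ) ∧
        (gdist S (w' ⌊s⌋₊) (w' ⌊t⌋₊) : ℝ) ≤ (K + 1) * |s - t| + C0 := by
      intro s hs t ht hst
      have hfn : ⌊t⌋₊ ≤ n := Nat.floor_le_of_le ht.2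
      obtain ⟨h1, h2⟩ := hq _ _ (Nat.floor_mono hst) hfn
      have b1 := Nat.floor_le hs.1
      have b2 := Nat.floor_le ht.1
      have b3 := Nat.lt_floor_add_one s
      have b4 := Nat.lt_floor_add_one t
      rw [abs_sub_comm, abs_of_nonneg (sub_nonneg.2 hst)]
      generalize (gdist S (w' ⌊s⌋₊) (w' ⌊t⌋₊) : ℕ) = D at *
      have hD : (0 : ℝ) ≤ D := by positivity
      have hKC : 0 ≤ K * C0 := by positivity
      have hKt : 0 ≤ K * (t - s) := mul_nonneg hK0 (sub_nonneg.2 hst)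
      constructor
      · have h3 : t - s ≤ (D + C0) * (K + 1) := by
          rw [hC0] at hKC ⊢
          nlinarith
        have := (div_le_iff₀ (by linarith : (0 : ℝ) < K + 1)).2 h3
        rw [one_div, inv_mul_eq_div]
        linarith
      · have : 0 ≤ 2 * K * (R : ℝ) := by positivity
        rw [hC0]
        linarith
    intro s hs t ht
    simp only
    rw [hdist, gdist_mul_left]
    rcases le_total s t with h | h
    · exact main s hs t ht h
    · rw [abs_sub_comm, hd.symm]
      exact main t ht s hs h
  have hfin := hM _ 0 n (by positivity) hqi
    (by obtain ⟨h, hh, e⟩ := hw0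
        exact ⟨h, hh, by simp [e]⟩)
    (by obtain ⟨h, hh, e⟩ := hwn
        exact ⟨h, hh, by simp [e]⟩) i ⟨by positivity, by exact_mod_cast hi⟩
  simp only [Nat.floor_natCast] at hfin
  have hlt : infDist (ι (g⁻¹ * w' i)) (ι '' (H : Set G)) < M + 1 := by linarith
  have hne : (ι '' (H : Set G)).Nonempty := ⟨ι 1, 1, H.one_mem, rfl⟩
  rw [Metric.infDist_lt_iff hne] at hlt
  obtain ⟨_, ⟨h, hh, rfl⟩, hlt⟩ := hlt
  refine ⟨h, hh, ?_⟩
  have e1 : gdist S (g⁻¹ * w' i) h = gdist S (w' i) (g * h) := by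
    rw [← gdist_mul_left g]; simp
  rw [hdist, e1] at hlt
  have h2 : (gdist S (w' i) (g * h) : ℝ) ≤ ((⌈M⌉₊ + 1 : ℕ) : ℝ) := by
    push_cast
    linarith [Nat.le_ceil M]
  have h3 : gdist S (w' i) (g * h) ≤ ⌈M⌉₊ + 1 := by exact_mod_cast h2
  have h4 := hd.tri (w i) (w' i) (g * h)
  have h5 := hw' i hi
  omega

/-- If `z` and an end of a geodesic are close to a coset, so is the point of the geodesic nearest
to `z`. -/
lemma near_projection (hgen : Subgroup.closure S = ⊤) (hM : UMorse S H) (R : ℕ) :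
    ∃ M, ∀ (g z : G) (n m : ℕ) (w : ℕ → G), Geo (gdist S) n w → m ≤ n →
      (∀ j ≤ n, gdist S z (w m) ≤ gdist S z (w j)) → Near S H R z g →
      (Near S H R (w 0) g ∨ Near S H R (w n) g) → Near S H M (w m) g := by
  have hd := gdist_isGraphDist hgen
  obtain ⟨M, hM⟩ := hM 3 0 R
  refine ⟨M, ?_⟩
  have main : ∀ (g z : G) (n m : ℕ) (w : ℕ → G), Geo (gdist S) n w → m ≤ n →
      (∀ j ≤ n, gdist S z (w m) ≤ gdist S z (w j)) → Near S H R z g →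
      Near S H R (w n) g → Near S H M (w m) g := by
    intro g z n m w hw hm hmin hz hn
    obtain ⟨v, hv, hv0, hvj⟩ := exists_elbow hd (z := z) (hw.sub m (n - m) (by omega))
      (fun j hj => by simpa using hmin (m + j) (by omega))
    have h0 := hvj 0 (by omega)
    have h1 := hvj (n - m) le_rfl
    simp only [Nat.add_zero, show m + (n - m) = n by omega] at h0 h1 hv
    rw [← h0]
    exact hM g _ v hv (by rwa [hv0]) (by rwa [h1]) _ (by omega)
  intro g z n m w hw hm hmin hz hn
  rcases hn with hn | hn
  · have := main g z n (n - m) _ (hw.rev hd) (by omega)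
      (fun j _ => by simpa [show n - (n - m) = m by omega] using hmin (n - j) (by omega)) hz
      (by simpa using hn)
    simpa [show n - (n - m) = m by omega] using this
  · exact main g z n m w hw hm hmin hz hn

/-- A coarse Helly property: finitely many cosets which are pairwise close have a common nearby
point. -/
lemma exists_common_point (hgen : Subgroup.closure S = ⊤) (hM : UMorse S H) (D k : ℕ) :
    ∃ R, ∀ s : Finset G, s.card ≤ k →
      (∀ a ∈ s, ∀ b ∈ s, ∃ p, Near S H D p a ∧ Near S H D p b) →
      ∃ p, ∀ a ∈ s, Near S H R p a := by
  classical
  have hd := gdist_isGraphDist hgen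
  induction k with
  | zero =>
    refine ⟨0, fun s hs _ => ⟨1, fun a ha => ?_⟩⟩
    simp [Finset.card_eq_zero.1 (Nat.le_zero.1 hs)] at ha
  | succ k ih =>
    obtain ⟨R, hR⟩ := ih
    obtain ⟨M₁, hM₁⟩ := near_projection hgen hM (max R D)
    obtain ⟨M₂, hM₂⟩ := hM 1 0 R
    refine ⟨max M₁ M₂, fun s hs hpair => ?_⟩
    by_cases hss : ∀ a ∈ s, ∀ b ∈ s, a = b
    · rcases s.eq_empty_or_nonempty with rfl | ⟨a, ha⟩
      · exact ⟨1, by simp⟩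
      · refine ⟨a, fun b hb => ⟨1, H.one_mem, ?_⟩⟩
        rw [hss b hb a ha, mul_one, hd.self]
        omega
    push Not at hss
    obtain ⟨a, ha, b, hb, hab⟩ := hss
    have hsub : ∀ c ∈ s, ∃ p, ∀ e ∈ s, e ≠ c → Near S H R p e := by
      intro c hc
      obtain ⟨p, hp⟩ := hR (s.erase c) (by rw [Finset.card_erase_of_mem hc]; omega)
        (fun e he f hf => hpair e (Finset.mem_of_mem_erase he) f (Finset.mem_of_mem_erase hf))
      exact ⟨p, fun e he hec => hp e (Finset.mem_erase.2 ⟨hec, he⟩)⟩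
    obtain ⟨x, hx⟩ := hsub b hb
    obtain ⟨y, hy⟩ := hsub a ha
    obtain ⟨z, hza, hzb⟩ := hpair a ha b hb
    -- The geodesic from `x` to `y` stays near all cosets other than `aH` and `bH`; its point
    -- nearest to `z` is near those two as well.
    obtain ⟨w, hw0, hwn, hw⟩ := exists_geo hd x y
    obtain ⟨m, hm, hmin⟩ := exists_nearest (gdist S) z w (gdist S x y)
    refine ⟨w m, fun c hc => ?_⟩
    by_cases hca : c = a
    · subst hca
      exact (hM₁ c z _ m w hw hm hmin (hza.mono (le_max_right _ _))
        (Or.inl (by rw [hw0]; exact (hx c hc hab).mono (le_max_left _ _)))).mono (le_max_left _ _)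
    by_cases hcb : c = b
    · subst hcb
      exact (hM₁ c z _ m w hw hm hmin (hzb.mono (le_max_right _ _))
        (Or.inr (by rw [hwn]; exact (hy c hc hca).mono (le_max_left _ _)))).mono (le_max_left _ _)
    exact (hM₂ c _ w hw.qpath (by rw [hw0]; exact hx c hc hcb) (by rw [hwn]; exact hy c hc hca)
      m hm).mono (le_max_right _ _)

/-- The midpoint of a sufficiently long geodesic with both ends in the `R`-neighborhood of a coset
is close to the coset, with a bound independent of `R`. -/
lemma near_midpoint (hgen : Subgroup.closure S = ⊤) (hM : UMorse S H) :
    ∃ M, ∀ (R n : ℕ) (g : G) (w : ℕ → G), Geo (gdist S) n w → 10 * R ≤ n →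
      Near S H R (w 0) g → Near S H R (w n) g → Near S H M (w (n / 2)) g := by
  have hd := gdist_isGraphDist hgen
  obtain ⟨M, hM⟩ := hM 3 0 0
  refine ⟨M, ?_⟩
  rintro R n g w hw hn ⟨a, ha, haR⟩ ⟨b, hb, hbR⟩
  obtain ⟨m, hm, hmmin⟩ := exists_nearest (gdist S) (g * a) w n
  obtain ⟨l, hl, hlmin⟩ := exists_nearest (gdist S) (g * b) w n
  have a1 := hmmin 0 (by omega)
  have a2 := hlmin n le_rfl
  have a3 := hd.tri (w 0) (g * a) (w m)
  have a4 := hd.tri (w l) (g * b) (w n)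
  have a5 := hw 0 m (by omega) hm
  have a6 := hw l n hl le_rfl
  rw [hd.symm (g * a) (w 0)] at a1
  rw [hd.symm (g * b) (w n)] at a2
  rw [hd.symm (w l) (g * b), hd.symm (g * b) (w n)] at a4
  -- The points `w m` and `w l` are within `2R` of the ends of `w` and within `R` of the coset.
  have hσ := hw.sub m (l - m) (by omega)
  obtain ⟨v, hv, hv0, hvn, hvj⟩ := exists_bridge hd (x := g * a) (y := g * b) hσ
    (fun j hj => by simpa using hmmin (m + j) (by omega))
    (fun j hj => by simpa [show m + (l - m) = l by omega] using hlmin (m + j) (by omega))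
    (by simp only [Nat.add_zero, show m + (l - m) = l by omega]; omega)
  have h1 := hvj (n / 2 - m) (by omega)
  simp only [show m + (n / 2 - m) = n / 2 by omega] at h1
  rw [← h1]
  exact hM g _ v hv ⟨a, ha, by rw [hv0, hd.self]⟩ ⟨b, hb, by rw [hvn, hd.self]⟩ _ (by omega)

/-- Left cosets meeting the `r`-ball about `p` are at most as many as the elements of the ball,
since distinct cosets are disjoint. -/
lemma card_le_ball (hS : S.Finite) (hgen : Subgroup.closure S = ⊤) (r : ℕ) (p : G) (s : Finset G)
    (hs : ∀ a ∈ s, ∀ b ∈ s, a ≠ b → a • (H : Set G) ≠ b • (H : Set G))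
    (hp : ∀ a ∈ s, Near S H r p a) : s.card ≤ {g : G | wordLength S g ≤ r}.ncard := by
  choose! h hH hr using hp
  rw [← Set.ncard_coe_finset]
  refine Set.ncard_le_ncard_of_injOn (fun a => p⁻¹ * (a * h a)) hr ?_ (finite_ball hS hgen r)
  intro a ha b hb hab
  by_contra hne
  have e : a * h a = b * h b := mul_left_cancel hab
  have key : ∀ c ∈ s, (c * h c) • (H : Set G) = c • (H : Set G) := fun c hc => by
    rw [mul_smul, smul_coe_set (hH c hc)]
  refine hs a ha b hb hne ?_
  rw [← key a ha, ← key b hb, e]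

end Cosets

/-- **Bounded packing.** A strongly quasiconvex subgroup `H` of a finitely generated
group `G` has bounded packing: for every `D ≥ 0` there is `N` such that among any `N`
distinct left cosets of `H`, two are at word-metric distance at least `D`. -/
theorem stronglyQuasiconvex_boundedPacking
    {G : Type*} [Group G] (S : Set G) (hS : S.Finite) (hgen : Subgroup.closure S = ⊤)
    (H : Subgroup G) (hsqc : StronglyQuasiconvex H) :
    ∀ D : ℝ, 0 ≤ D → ∃ N : ℕ, ∀ g : Fin N → G,
      (∀ i j : Fin N, i ≠ j → g i • (H : Set G) ≠ g j • (H : Set G)) →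
      ∃ i j : Fin N, i ≠ j ∧ ∀ x ∈ g i • (H : Set G), ∀ y ∈ g j • (H : Set G),
        D ≤ wordDist S x y := by
  classical
  intro D _
  have hd := gdist_isGraphDist hgen
  have hM := uMorse_of_stronglyQuasiconvex hS hgen hsqc
  obtain ⟨M, hmid⟩ := near_midpoint hgen hM
  set B : ℕ → ℕ := fun r => {g : G | wordLength S g ≤ r}.ncard with hB
  set k := B M + 1 with hk
  obtain ⟨R, hR⟩ := exists_common_point hgen hM ⌈D⌉₊ (k + 1)
  refine ⟨k + B (R + 10 * R) + 1, fun g hg => ?_⟩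
  by_contra! hcon
  have hinj : Function.Injective g := fun i j hij => by
    by_contra hne
    exact hg i j hne (by rw [hij])
  set T : Finset G := Finset.univ.image g with hT
  have hTcard : T.card = k + B (R + 10 * R) + 1 := by
    rw [hT, Finset.card_image_of_injective _ hinj, Finset.card_univ, Fintype.card_fin]
  have hTdist : ∀ a ∈ T, ∀ b ∈ T, a ≠ b → a • (H : Set G) ≠ b • (H : Set G) := by
    intro a ha b hb hab
    obtain ⟨i, -, rfl⟩ := Finset.mem_image.1 ha
    obtain ⟨j, -, rfl⟩ := Finset.mem_image.1 hb
    exact hg i j fun h => hab (by rw [h])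
  have hTpair : ∀ a ∈ T, ∀ b ∈ T, ∃ p, Near S H ⌈D⌉₊ p a ∧ Near S H ⌈D⌉₊ p b := by
    intro a ha b hb
    obtain ⟨i, -, rfl⟩ := Finset.mem_image.1 ha
    obtain ⟨j, -, rfl⟩ := Finset.mem_image.1 hb
    have hself : ∀ x ∈ g i • (H : Set G), Near S H ⌈D⌉₊ x (g i) := by
      rintro _ ⟨h, hh, rfl⟩
      exact ⟨h, hh, by simp [hd.self]⟩
    by_cases hij : i = j
    · subst hij
      have := hself (g i) ⟨1, H.one_mem, by simp⟩
      exact ⟨_, this, this⟩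
    · obtain ⟨x, hx, y, ⟨h, hh, rfl⟩, hlt⟩ := hcon i j hij
      refine ⟨x, hself x hx, h, hh, ?_⟩
      have : (gdist S x (g j * h) : ℝ) ≤ ⌈D⌉₊ := hlt.le.trans (Nat.le_ceil D)
      exact_mod_cast this
  obtain ⟨s, hsT, hscard⟩ := Finset.exists_subset_card_eq (s := T) (n := k) (by omega)
  have hcommon : ∀ u ⊆ T, u.card ≤ k + 1 → ∃ p, ∀ a ∈ u, Near S H R p a := fun u hu hc =>
    hR u hc fun a ha b hb => hTpair a (hu ha) b (hu hb)
  obtain ⟨p, hp⟩ := hcommon s hsT (by omega)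
  have hall : ∀ a ∈ T, Near S H (R + 10 * R) p a := by
    intro a ha
    obtain ⟨q, hq⟩ := hcommon (insert a s) (Finset.insert_subset ha hsT)
      ((Finset.card_insert_le _ _).trans (by omega))
    have hpq : gdist S p q ≤ 10 * R := by
      by_contra! hlong
      -- Otherwise the midpoint of a geodesic from `p` to `q` is `M`-close to more cosets than
      -- a ball of radius `M` has elements.
      obtain ⟨w, hw0, hwn, hw⟩ := exists_geo hd p q
      have := card_le_ball hS hgen M (w (gdist S p q / 2)) s
        (fun a ha b hb => hTdist a (hsT ha) b (hsT hb)) fun c hc =>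
          hmid R _ c w hw hlong.le (by rw [hw0]; exact hp c hc)
            (by rw [hwn]; exact hq c (Finset.mem_insert_of_mem hc))
      rw [hscard] at this
      exact absurd this (by simp [hk, hB])
    obtain ⟨h, hh, hle⟩ := hq a (Finset.mem_insert_self _ _)
    refine ⟨h, hh, ?_⟩
    have := hd.tri p q (a * h)
    omega
  have hfinal := card_le_ball hS hgen _ p T hTdist hall
  rw [hTcard] at hfinal
  have : B (R + 10 * R) = {g : G | wordLength S g ≤ R + 10 * R}.ncard := rfl
  omega
end
end

section
/- Let X and A be proper geodesic metric spaces and let f : A → X be a quasi-isometric embedding such that f(A) is a Morse subset of X. Then for each Morse gauge N there is a Morse gauge N′ (depending only on N and the quasi-isometric embedding constants of f) such that for every N-Morse geodesic ray γ : [0,∞) → A there is an N′-Morse geodesic ray in X with basepoint f(γ(0)) whose Hausdorff distance from f(γ) is finite. -/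
/-!
Morseness of a subset is a coarse notion, and two instances of this carry the proof.

* If `f` is a quasi-isometric embedding with Morse image and `S` is Morse, then `f '' S` is Morse
  (`MorseWithGauge.image`): a quasi-geodesic of `X` with endpoints on `f '' S` stays near `range f`,
  so it can be replaced, up to a bounded error, by the image of a quasi-geodesic of `A` with
  endpoints on `S`, and this one stays near `S`.
* A set at finite Hausdorff distance from a Morse set is Morse (`MorseWithGauge.of_close`).

Apply the first to the ray `γ`, so that `S = f '' (γ '' Ici 0)` is Morse with a gauge independent
of `γ`. Geodesics from `f (γ 0)` to `f (γ n)` stay within a bounded distance of `S`, and since `X`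
is proper they subconverge to a geodesic ray `γ'`, which is still within a bounded distance of `S`
(`exists_geodesicRay_near`; the limit is taken pointwise along an ultrafilter). Conversely, every
point of `S` is near `γ'` (`near_ray_of_ray_near`): the parameters `u n` for which `γ' n` is
near `f (γ (u n))` start near `0`, tend to infinity and make jumps of bounded size, so they are
coarsely dense in `[0, ∞)`. All constants are uniform in `γ`, and the second fact finishes.
-/

open Metric Set Pointwise
open scoped ENNReal

noncomputable section

lemma exists_mem_dist_lt_of_infDist_le {X : Type*} [MetricSpace X] {S : Set X} (hS : S.Nonempty)
    {x : X} {D : ℝ} (h : infDist x S ≤ D) : ∃ y ∈ S, dist x y < D + 1 :=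
  (infDist_lt_iff hS).1 (by linarith)

lemma QIEmbedOn.perturb {X : Type*} [MetricSpace X] {γ γ' : ℝ → X} {s : Set ℝ} {K C D : ℝ}
    (h : QIEmbedOn γ s K C) (hd : ∀ t ∈ s, dist (γ t) (γ' t) ≤ D) :
    QIEmbedOn γ' s K (C + 2 * D) := by
  intro a ha b hb
  obtain ⟨h1, h2⟩ := h a ha b hb
  have hda := hd a ha
  have hdb := hd b hb
  have t1 := dist_triangle4 (γ a) (γ' a) (γ' b) (γ b)
  have t2 := dist_triangle4 (γ' a) (γ a) (γ b) (γ' b)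
  rw [dist_comm (γ' b) (γ b)] at t1
  rw [dist_comm (γ' a) (γ a)] at t2
  constructor <;> linarith

/-- A path whose composite with a quasi-isometric embedding is a quasi-geodesic is itself a
quasi-geodesic. -/
lemma QIEmbedOn.of_comp {A X : Type*} [MetricSpace A] [MetricSpace X] {f : A → X} {K₀ L₀ : ℝ}
    (hf : QIEmbeddingWith f K₀ L₀) {β : ℝ → A} {s : Set ℝ} {K C : ℝ} (hC : 0 ≤ C)
    (h : QIEmbedOn (f ∘ β) s K C) : QIEmbedOn β s (K₀ * K) (K₀ * (C + L₀)) := by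
  obtain ⟨hK₀, hL₀, hf⟩ := hf
  have hpos : 0 < K₀ := by linarith
  intro a ha b hb
  obtain ⟨h1, h2⟩ := h a ha b hb
  obtain ⟨h3, h4⟩ := hf (β a) (β b)
  simp only [Function.comp] at h1 h2
  set d := dist (β a) (β b)
  constructor
  · have h5 : 1 / K₀ * (1 / K * |a - b| - (C + L₀)) ≤ d := by
      rw [one_div_mul_eq_div, div_le_iff₀ hpos]
      linarith
    have h6 : 1 / K₀ * (C + L₀) ≤ K₀ * (C + L₀) := by
      apply mul_le_mul_of_nonneg_right _ (by linarith)
      exact ((div_le_one hpos).2 hK₀).trans hK₀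
    have h7 : 1 / (K₀ * K) * |a - b| = 1 / K₀ * (1 / K * |a - b|) := by
      rw [← mul_assoc, one_div_mul_one_div]
    rw [h7]
    linarith
  · have h5 : 1 / K₀ * d ≤ K * |a - b| + (C + L₀) := by linarith
    rw [one_div_mul_eq_div, div_le_iff₀ hpos] at h5
    linarith

/-- A quasi-isometric embedding with Morse image carries Morse subsets to Morse subsets. -/
lemma MorseWithGauge.image {A X : Type*} [MetricSpace A] [MetricSpace X] {f : A → X} {K₀ L₀ : ℝ}
    (hf : QIEmbeddingWith f K₀ L₀) {M : ℝ → ℝ → ℝ} (hM : MorseWithGauge (range f) M)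
    {N : ℝ → ℝ → ℝ} {S : Set A} (hS : MorseWithGauge S N) :
    MorseWithGauge (f '' S) (fun K C => M K C + 1 +
      (K₀ * (N (K₀ * K) (K₀ * (C + 2 * (M K C + 1) + L₀)) + 1) + L₀)) := by
  intro K C hK hC α a b hab hα hαa hαb t ht
  have hM0 : 0 ≤ M K C := infDist_nonneg.trans
    (hM K C hK hC α a b hab hα (image_subset_range f S hαa) (image_subset_range f S hαb) t ht)
  -- A lift of `α` to `A` up to bounded error, with endpoints in `S`.
  have key : ∀ r, ∃ x : A, (r ∈ Icc a b → dist (α r) (f x) ≤ M K C + 1) ∧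
      (r = a ∨ r = b → x ∈ S) := by
    intro r
    by_cases hr : r = a ∨ r = b
    · have : α r ∈ f '' S := by rcases hr with rfl | rfl <;> assumption
      obtain ⟨x, hx, hxr⟩ := this
      refine ⟨x, fun _ => ?_, fun _ => hx⟩
      rw [hxr, dist_self]
      linarith
    · by_cases hr' : r ∈ Icc a b
      · obtain ⟨_, ⟨x, rfl⟩, hx⟩ := exists_mem_dist_lt_of_infDist_le
          ⟨_, image_subset_range f S hαa⟩ (hM K C hK hC α a b hab hα
            (image_subset_range f S hαa) (image_subset_range f S hαb) r hr')
        exact ⟨x, fun _ => hx.le, fun h => absurd h hr⟩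
      · obtain ⟨x, -, -⟩ := hαa
        exact ⟨x, fun h => absurd h hr', fun h => absurd h hr⟩
  choose β hβ hβS using key
  have hβqi := QIEmbedOn.of_comp hf (by linarith) (hα.perturb (γ' := f ∘ β) hβ)
  obtain ⟨hK₀, hL₀, hf⟩ := hf
  obtain ⟨y, hyS, hy⟩ := exists_mem_dist_lt_of_infDist_le ⟨_, hβS a (Or.inl rfl)⟩
    (hS _ _ (one_le_mul_of_one_le_of_one_le hK₀ hK)
      (mul_nonneg (by linarith) (by linarith)) β a b hab hβqi
      (hβS a (Or.inl rfl)) (hβS b (Or.inr rfl)) t ht)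
  calc infDist (α t) (f '' S) ≤ dist (α t) (f y) := infDist_le_dist_of_mem (mem_image_of_mem f hyS)
    _ ≤ dist (α t) (f (β t)) + dist (f (β t)) (f y) := dist_triangle _ _ _
    _ ≤ _ := add_le_add (hβ t ht) ((hf _ _).2.trans (by gcongr))

/-- A set at bounded Hausdorff distance from a Morse set is Morse. -/
lemma MorseWithGauge.of_close {X : Type*} [MetricSpace X] {S T : Set X} {N : ℝ → ℝ → ℝ}
    (hS : MorseWithGauge S N) {D E : ℝ} (hD : 0 ≤ D) (hTS : ∀ t ∈ T, ∃ s ∈ S, dist t s ≤ D)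
    (hST : ∀ s ∈ S, ∃ t ∈ T, dist s t ≤ E) :
    MorseWithGauge T (fun K C => D + (N K (C + 2 * D) + 1) + E) := by
  intro K C hK hC α a b hab hα hαa hαb t ht
  obtain ⟨p, hp, hap⟩ := hTS _ hαa
  obtain ⟨q, hq, hbq⟩ := hTS _ hαb
  -- Move the endpoints of `α` onto `S`; this is why quasi-geodesics may be discontinuous.
  let β : ℝ → X := fun r => if r = a then p else if r = b then q else α r
  have hβ : ∀ r ∈ Icc a b, dist (α r) (β r) ≤ D := by
    intro r _
    by_cases h1 : r = a
    · simpa [β, h1] using hap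
    · by_cases h2 : r = b
      · subst h2
        simpa [β, h1] using hbq
      · simpa [β, h1, h2] using hD
  have hβa : β a ∈ S := by simpa [β] using hp
  have hβb : β b ∈ S := by
    by_cases h : b = a
    · simpa [β, h] using hp
    · simpa [β, h] using hq
  obtain ⟨s, hs, hts⟩ := exists_mem_dist_lt_of_infDist_le ⟨p, hp⟩
    (hS K (C + 2 * D) hK (by linarith) β a b hab (hα.perturb hβ) hβa hβb t ht)
  obtain ⟨x, hx, hsx⟩ := hST s hs
  have h1 := dist_triangle4 (α t) (β t) s x
  have h2 : infDist (α t) T ≤ dist (α t) x := infDist_le_dist_of_mem hx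
  have h3 := hβ t ht
  linarith

/-- In a proper geodesic space, an unbounded Morse set has, at each of its points, a geodesic ray
staying within bounded distance of it. -/
lemma exists_geodesicRay_near {X : Type*} [MetricSpace X] [ProperSpace X] (hX : IsGeodesicSpace X)
    {S : Set X} {N : ℝ → ℝ → ℝ} (hS : MorseWithGauge S N) {o : X} (ho : o ∈ S) {p : ℕ → X}
    (hp : ∀ n, p n ∈ S) (hlim : Filter.Tendsto (fun n => dist o (p n)) Filter.atTop Filter.atTop) :
    ∃ γ' : ℝ → X, γ' 0 = o ∧ IsGeodesicRay γ' ∧ ∀ s ∈ Ici (0 : ℝ), infDist (γ' s) S ≤ N 1 0 := by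
  choose η hη0 hη1 hη using fun n => hX o (p n)
  let U : Ultrafilter ℕ := Filter.hyperfilter ℕ
  have hU : (U : Filter ℕ) ≤ Filter.atTop := by
    rw [← Nat.cofinite_eq_atTop]
    exact Filter.hyperfilter_le_cofinite
  have hev : ∀ s : ℝ, ∀ᶠ n in (U : Filter ℕ), s ≤ dist o (p n) :=
    fun s => hU (hlim.eventually_ge_atTop s)
  have key : ∀ s : ℝ, ∃ x : X, 0 ≤ s → Filter.Tendsto (fun n => η n s) U (nhds x) := by
    intro s
    by_cases hs : 0 ≤ s
    · have hball : ((U.map fun n => η n s : Ultrafilter X) : Filter X) ≤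
          Filter.principal (closedBall o s) := by
        rw [Filter.le_principal_iff]
        change ∀ᶠ n in (U : Filter ℕ), η n s ∈ closedBall o s
        filter_upwards [hev s] with n hn
        have := hη n s ⟨hs, hn⟩ 0 ⟨le_rfl, dist_nonneg⟩
        rw [hη0, sub_zero, abs_of_nonneg hs] at this
        exact this.le
      obtain ⟨x, -, hx⟩ := (isCompact_closedBall o s).ultrafilter_le_nhds _ hball
      exact ⟨x, fun _ => hx⟩
    · exact ⟨o, fun h => absurd h hs⟩
  choose γ' hγ' using key
  refine ⟨γ', ?_, ?_, ?_⟩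
  · refine tendsto_nhds_unique (hγ' 0 le_rfl) ?_
    simp only [hη0]
    exact tendsto_const_nhds
  · intro s hs t ht
    refine tendsto_nhds_unique ((hγ' s hs).dist (hγ' t ht)) (tendsto_const_nhds.congr' ?_)
    filter_upwards [hev s, hev t] with n hns hnt
    exact (hη n s ⟨hs, hns⟩ t ⟨ht, hnt⟩).symm
  · intro s hs
    refine le_of_tendsto (((continuous_infDist_pt S).tendsto _).comp (hγ' s hs)) ?_
    filter_upwards [hev s] with n hn
    refine hS 1 0 le_rfl le_rfl (η n) 0 (dist o (p n)) dist_nonneg ?_ ?_ ?_ s ⟨hs, hn⟩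
    · intro a ha b hb
      rw [hη n a ha b hb]
      constructor <;> linarith
    · rwa [hη0]
    · rw [hη1]
      exact hp n

/-- If a geodesic ray lies in the `D`-neighborhood of a quasi-geodesic ray `f ∘ γ` with the same
origin, then conversely `f ∘ γ` lies in a uniform neighborhood of the geodesic ray. -/
lemma near_ray_of_ray_near {A X : Type*} [MetricSpace A] [MetricSpace X] {f : A → X}
    {K₀ L₀ : ℝ} (hf : QIEmbeddingWith f K₀ L₀) {γ : ℝ → A} (hγ : IsGeodesicRay γ) {γ' : ℝ → X}
    (hγ' : IsGeodesicRay γ') (h0 : γ' 0 = f (γ 0)) {D : ℝ} (hD : 0 ≤ D)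
    (hnear : ∀ s ∈ Ici (0 : ℝ), ∃ y ∈ f '' (γ '' Ici (0 : ℝ)), dist (γ' s) y ≤ D) :
    ∀ y ∈ f '' (γ '' Ici (0 : ℝ)), ∃ x ∈ γ' '' Ici (0 : ℝ),
      dist y x ≤ K₀ * (K₀ * (1 + 2 * D + L₀)) + L₀ + D := by
  obtain ⟨hK₀, hL₀, hf⟩ := hf
  have hpos : 0 < K₀ := by linarith
  have key : ∀ n : ℕ, ∃ u : ℝ, 0 ≤ u ∧ dist (γ' n) (f (γ u)) ≤ D ∧ (n = 0 → u = 0) := by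
    intro n
    rcases Nat.eq_zero_or_pos n with rfl | hn
    · exact ⟨0, le_rfl, by simpa [h0] using hD, fun _ => rfl⟩
    · obtain ⟨_, ⟨_, ⟨u, hu, rfl⟩, rfl⟩, hd⟩ := hnear n (mem_Ici.2 (Nat.cast_nonneg n))
      exact ⟨u, hu, hd, fun h => absurd h hn.ne'⟩
  choose u hu hud hu0 using key
  rintro _ ⟨_, ⟨v, hv, rfl⟩, rfl⟩
  have hv : 0 ≤ v := hv
  have hubdd : ∃ n, v < u n := by
    obtain ⟨n, hn⟩ := exists_nat_gt (K₀ * v + L₀ + D)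
    refine ⟨n, lt_of_not_ge fun hle => ?_⟩
    have h1 := hγ' n (mem_Ici.2 (Nat.cast_nonneg n)) 0 (mem_Ici.2 le_rfl)
    have h2 := (hf (γ (u n)) (γ 0)).2
    rw [hγ _ (hu n) 0 (mem_Ici.2 le_rfl), sub_zero, abs_of_nonneg (hu n)] at h2
    rw [sub_zero, abs_of_nonneg (Nat.cast_nonneg n), h0] at h1
    have h3 := dist_triangle (γ' n) (f (γ (u n))) (f (γ 0))
    have h4 := hud n
    have h5 : K₀ * u n ≤ K₀ * v := by gcongr
    linarith
  -- The first time `u` passes `v`; the previous value of `u` is then close to `v`.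
  classical
  obtain ⟨m, hm1, hm2⟩ : ∃ m, u m ≤ v ∧ v < u (m + 1) := by
    have hspec := Nat.find_spec hubdd
    obtain ⟨m, hm⟩ : ∃ m, Nat.find hubdd = m + 1 := by
      refine Nat.exists_eq_succ_of_ne_zero fun h => ?_
      rw [h, hu0 0 rfl] at hspec
      linarith
    exact ⟨m, not_lt.1 (Nat.find_min hubdd (by omega)), hm ▸ hspec⟩
  have hjump : u (m + 1) - u m ≤ K₀ * (1 + 2 * D + L₀) := by
    have h1 := (hf (γ (u (m + 1))) (γ (u m))).1
    rw [hγ _ (hu _) _ (hu _), abs_of_nonneg (by linarith)] at h1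
    have h2 := hγ' (m + 1 : ℕ) (mem_Ici.2 (Nat.cast_nonneg _)) m
      (mem_Ici.2 (Nat.cast_nonneg m))
    have h3 : |((m + 1 : ℕ) : ℝ) - m| = 1 := by simp
    rw [h3] at h2
    have h4 := dist_triangle4 (f (γ (u (m + 1)))) (γ' (m + 1 : ℕ)) (γ' m) (f (γ (u m)))
    have h5 := hud (m + 1)
    rw [dist_comm] at h5
    have h6 : 1 / K₀ * (u (m + 1) - u m) ≤ 1 + 2 * D + L₀ := by linarith [hud m]
    rw [one_div_mul_eq_div, div_le_iff₀ hpos] at h6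
    linarith
  refine ⟨γ' m, ⟨m, mem_Ici.2 (Nat.cast_nonneg m), rfl⟩, ?_⟩
  have h1 := (hf (γ v) (γ (u m))).2
  rw [hγ v hv _ (hu m), abs_of_nonneg (by linarith)] at h1
  have h2 := dist_triangle (f (γ v)) (f (γ (u m))) (γ' m)
  have h3 := hud m
  rw [dist_comm] at h3
  have h4 : K₀ * (v - u m) ≤ K₀ * (K₀ * (1 + 2 * D + L₀)) := by
    gcongr
    linarith
  linarith

/-- A quasi-isometric embedding `f : A → X` of proper geodesic spaces with Morse image
induces a Morse-preserving map: for each Morse gauge `N` there is a Morse gauge `N'` such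
that every `N`-Morse geodesic ray in `A` is carried, up to finite Hausdorff distance, to
an `N'`-Morse geodesic ray in `X` based at `f(γ(0))`. -/
theorem morse_preserving_of_morse_image
    {A X : Type*} [MetricSpace A] [MetricSpace X] [ProperSpace A] [ProperSpace X]
    (hA : IsGeodesicSpace A) (hX : IsGeodesicSpace X)
    (f : A → X) (hf : IsQIEmbedding f) (hMorse : IsMorse (Set.range f)) :
    ∀ N : ℝ → ℝ → ℝ, ∃ N' : ℝ → ℝ → ℝ,
      ∀ γ : ℝ → A, IsGeodesicRay γ → MorseWithGauge (γ '' Ici (0 : ℝ)) N →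
        ∃ γ' : ℝ → X, γ' 0 = f (γ 0) ∧ IsGeodesicRay γ' ∧
          MorseWithGauge (γ' '' Ici (0 : ℝ)) N' ∧
          EMetric.hausdorffEdist (f '' (γ '' Ici (0 : ℝ))) (γ' '' Ici (0 : ℝ)) ≠ ⊤ := by
  intro N
  obtain ⟨K₀, L₀, hf⟩ := hf
  choose! M _ hM using hMorse
  -- `N₁` is a gauge for `f ∘ γ`, and `D`, `E` bound the Hausdorff distance to the limit ray.
  let N₁ : ℝ → ℝ → ℝ := fun K C => M K C + 1 +
    (K₀ * (N (K₀ * K) (K₀ * (C + 2 * (M K C + 1) + L₀)) + 1) + L₀)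
  let D : ℝ := N₁ 1 0 + 1
  let E : ℝ := K₀ * (K₀ * (1 + 2 * D + L₀)) + L₀ + D
  refine ⟨fun K C => D + (N₁ K (C + 2 * D) + 1) + E, fun γ hγ hγN => ?_⟩
  have hS : MorseWithGauge (f '' (γ '' Ici (0 : ℝ))) N₁ := MorseWithGauge.image hf hM hγN
  have hmem : ∀ v : ℝ, 0 ≤ v → f (γ v) ∈ f '' (γ '' Ici (0 : ℝ)) :=
    fun v hv => mem_image_of_mem f (mem_image_of_mem γ hv)
  have hlim : Filter.Tendsto (fun n : ℕ => dist (f (γ 0)) (f (γ n)))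
      Filter.atTop Filter.atTop := by
    have hpos : 0 < 1 / K₀ := one_div_pos.2 (by linarith [hf.1])
    refine Filter.tendsto_atTop_mono (fun n => ?_) (Filter.tendsto_atTop_add_const_right _ (-L₀)
      ((tendsto_natCast_atTop_atTop (R := ℝ)).const_mul_atTop hpos))
    have h := (hf.2.2 (γ 0) (γ n)).1
    rw [hγ 0 (mem_Ici.2 le_rfl) n (mem_Ici.2 (Nat.cast_nonneg n)), zero_sub, abs_neg,
      abs_of_nonneg (Nat.cast_nonneg n)] at h
    linarith
  obtain ⟨γ', h0, hray, hnear⟩ := exists_geodesicRay_near hX hS (hmem 0 le_rfl)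
    (fun n : ℕ => hmem n (Nat.cast_nonneg n)) hlim
  have hD : 0 ≤ D := by
    have := infDist_nonneg.trans (hnear 0 (mem_Ici.2 le_rfl))
    linarith
  have hnear' : ∀ s ∈ Ici (0 : ℝ), ∃ y ∈ f '' (γ '' Ici (0 : ℝ)), dist (γ' s) y ≤ D := by
    intro s hs
    obtain ⟨y, hy, hd⟩ := exists_mem_dist_lt_of_infDist_le ⟨_, hmem 0 le_rfl⟩ (hnear s hs)
    exact ⟨y, hy, hd.le⟩
  have hST := near_ray_of_ray_near hf hγ hray h0 hD hnear'
  have hTS : ∀ t ∈ γ' '' Ici (0 : ℝ), ∃ s ∈ f '' (γ '' Ici (0 : ℝ)), dist t s ≤ D := by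
    rintro _ ⟨s, hs, rfl⟩
    exact hnear' s hs
  refine ⟨γ', h0, hray, hS.of_close hD hTS hST, ?_⟩
  have hle : hausdorffEDist (f '' (γ '' Ici (0 : ℝ))) (γ' '' Ici (0 : ℝ)) ≤
      ENNReal.ofReal (max D E) := by
    refine hausdorffEDist_le_of_mem_edist (fun x hx => ?_) (fun x hx => ?_)
    · obtain ⟨y, hy, hd⟩ := hST x hx
      exact ⟨y, hy, by rw [edist_dist]; exact ENNReal.ofReal_le_ofReal (hd.trans (le_max_right _ _))⟩
    · obtain ⟨y, hy, hd⟩ := hTS x hx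
      exact ⟨y, hy, by rw [edist_dist]; exact ENNReal.ofReal_le_ofReal (hd.trans (le_max_left _ _))⟩
  exact ne_top_of_le_ne_top ENNReal.ofReal_ne_top hle
end
end

section
/- Let X be a geodesic metric space and A a Morse subset of X with Morse gauge μ. Then there is a constant D > 0, depending only on μ, such that the following holds: if γ : [0,∞) → X is a geodesic ray that lies in some finite neighborhood of A, then there is C > 0 such that γ([C,∞)) is contained in the D-neighborhood of A. -/
/-!
If `γ` stays `R`-close to `A`, choose `a, b ∈ A` that are `R`-close to `γ 0` and `γ T` with `T`
large, and let `γ s`, `γ s'` be points of `γ '' [0, T]` nearest to `a` and `b`. The concatenation of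
a geodesic `[a, γ s]`, the piece `γ|[s, s']` and a geodesic `[γ s', b]` is a `(3, 0)`-quasi-geodesic
(`qiEmbedOn_of_arms`): near one corner this is the usual nearest-point argument, and two points on
opposite arms are far apart because the arms have length at most `R` while `s' - s ≥ 4 R`. The
constants do not depend on `R`, so the Morse property puts `γ t` within `μ 3 0` of `A` for every
`t ∈ [s, s']`. Since `s ≤ 2 R` and `s' ≥ T - 2 R`, every `t ≥ 2 R` is covered once `T` is large.
-/

open Metric Set Pointwise
open scoped ENNReal

noncomputable section

/-- A path made of three isometrically parametrized pieces over `[p, s]`, `[s, s']`, `[s', q]` is a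
`(3, 0)`-quasi-geodesic provided each corner is a nearest point of the middle piece to the
corresponding arm and the arms are short compared with the middle piece. -/
lemma qiEmbedOn_of_arms {X : Type*} [MetricSpace X] {β : ℝ → X} {p s s' q R : ℝ}
    (hss : s ≤ s')
    (h1 : IsGeodesicOn β p s) (h2 : IsGeodesicOn β s s') (h3 : IsGeodesicOn β s' q)
    (hp : ∀ v ∈ Icc s s', s - p ≤ dist (β p) (β v))
    (hq : ∀ v ∈ Icc s s', q - s' ≤ dist (β q) (β v))
    (hpR : s - p ≤ R) (hqR : q - s' ≤ R) (hR : 4 * R ≤ s' - s) :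
    QIEmbedOn β (Icc p q) 3 0 := by
  have e1 : ∀ u v, p ≤ u → u ≤ v → v ≤ s → dist (β u) (β v) = v - u := fun u v a b c => by
    rw [h1 u ⟨a, b.trans c⟩ v ⟨a.trans b, c⟩, abs_sub_comm, abs_of_nonneg (by linarith)]
  have e2 : ∀ u v, s ≤ u → u ≤ v → v ≤ s' → dist (β u) (β v) = v - u := fun u v a b c => by
    rw [h2 u ⟨a, b.trans c⟩ v ⟨a.trans b, c⟩, abs_sub_comm, abs_of_nonneg (by linarith)]
  have e3 : ∀ u v, s' ≤ u → u ≤ v → v ≤ q → dist (β u) (β v) = v - u := fun u v a b c => by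
    rw [h3 u ⟨a, b.trans c⟩ v ⟨a.trans b, c⟩, abs_sub_comm, abs_of_nonneg (by linarith)]
  have key : ∀ u v, p ≤ u → u ≤ v → v ≤ q →
      (v - u) / 3 ≤ dist (β u) (β v) ∧ dist (β u) (β v) ≤ v - u := by
    intro u v hu huv hv
    rcases le_total v s with hvs | hvs
    · have := e1 u v hu huv hvs
      constructor <;> linarith
    rcases le_total s' u with hus' | hus'
    · have := e3 u v hus' huv hv
      constructor <;> linarith
    rcases le_total u s with hus | hus <;> rcases le_total v s' with hvs' | hvs'
    · have a1 := e1 u s hu hus le_rfl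
      have a2 := e2 s v le_rfl hvs hvs'
      have a3 := e1 p u le_rfl hu hus
      have a4 := hp v ⟨hvs, hvs'⟩
      have t1 := dist_triangle (β u) (β s) (β v)
      have t2 := dist_triangle (β p) (β u) (β v)
      have t3 := dist_triangle_left (β s) (β v) (β u)
      constructor <;> linarith
    · have a1 := e1 u s hu hus le_rfl
      have a2 := e2 s s' le_rfl hss le_rfl
      have a3 := e3 s' v le_rfl hvs' hv
      have t1 := dist_triangle4 (β u) (β s) (β s') (β v)
      have t2 := dist_triangle4 (β s) (β u) (β v) (β s')
      rw [dist_comm (β s) (β u), dist_comm (β v) (β s')] at t2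
      constructor <;> linarith
    · have a1 := e2 u v hus huv hvs'
      constructor <;> linarith
    · have a1 := e2 u s' hus hus' le_rfl
      have a2 := e3 s' v le_rfl hvs' hv
      have a3 := e3 v q hvs' hv le_rfl
      have a4 := hq u ⟨hus, hus'⟩
      have t1 := dist_triangle (β u) (β s') (β v)
      have t2 := dist_triangle_left (β q) (β u) (β v)
      have t3 := dist_triangle_right (β u) (β s') (β v)
      rw [dist_comm (β v) (β u)] at t2
      constructor <;> linarith
  intro u hu v hv
  rcases le_total u v with h | h
  · have := key u v hu.1 h hv.2
    rw [abs_sub_comm, abs_of_nonneg (sub_nonneg.2 h)]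
    constructor <;> linarith [this.1, this.2]
  · have := key v u hv.1 h hu.2
    rw [dist_comm, abs_of_nonneg (sub_nonneg.2 h)]
    constructor <;> linarith [this.1, this.2]

/-- A geodesic segment has a point nearest to a given point `x`. If `x` is `R`-close to `γ c`, then
that nearest point is `γ s` with `s` at distance at most `2 R` from `c`. -/
lemma exists_nearest_on_ray {X : Type*} [MetricSpace X] {γ : ℝ → X} (hγ : IsGeodesicRay γ)
    {T c R : ℝ} (hc : c ∈ Icc 0 T) {x : X} (hx : dist (γ c) x < R) :
    ∃ s ∈ Icc 0 T, (∀ t ∈ Icc 0 T, dist x (γ s) ≤ dist x (γ t)) ∧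
      dist x (γ s) ≤ R ∧ |c - s| ≤ 2 * R := by
  have hL : LipschitzOnWith 1 γ (Icc 0 T) := LipschitzOnWith.of_dist_le_mul fun u hu v hv => by
    rw [hγ u hu.1 v hv.1, Real.dist_eq]; simp
  obtain ⟨s, hs, hmin⟩ := isCompact_Icc.exists_isMinOn ⟨c, hc⟩
    ((continuous_const (y := x)).dist continuous_id |>.comp_continuousOn hL.continuousOn)
  have hmin' : ∀ t ∈ Icc 0 T, dist x (γ s) ≤ dist x (γ t) := fun t ht => hmin ht
  have h1 := hmin' c hc
  rw [dist_comm x (γ c)] at h1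
  have h2 := dist_triangle (γ c) x (γ s)
  rw [hγ c hc.1 s hs.1] at h2
  exact ⟨s, hs, hmin', by linarith, by linarith⟩

/-- A geodesic ray lying in some finite neighborhood of a Morse subset `A` with Morse
gauge `μ` eventually lies in a `D`-neighborhood of `A`, where `D > 0` depends only on `μ`. -/
theorem ray_in_finite_nbhd_of_morse
    : ∀ μ : ℝ → ℝ → ℝ, ∃ D : ℝ, 0 < D ∧
      ∀ (X : Type) [MetricSpace X], IsGeodesicSpace X →
        ∀ A : Set X, MorseWithGauge A μ →
          ∀ γ : ℝ → X, IsGeodesicRay γ →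
            (∃ r : ℝ, ∀ t ∈ Ici (0 : ℝ), infDist (γ t) A ≤ r) →
            ∃ C : ℝ, 0 < C ∧ ∀ t : ℝ, C ≤ t → infDist (γ t) A ≤ D := by
  intro μ
  refine ⟨max (μ 3 0) 0 + 1, by positivity, ?_⟩
  intro X _ hX A hA γ hγ ⟨r, hr⟩
  have hr0 : 0 ≤ r := infDist_nonneg.trans (hr 0 self_mem_Ici)
  obtain ⟨R, hR⟩ : ∃ R, R = r + 1 := ⟨_, rfl⟩
  refine ⟨2 * R, by linarith, fun t ht => ?_⟩
  -- `infDist` to the empty set is `0` by convention.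
  rcases A.eq_empty_or_nonempty with rfl | hne
  · rw [infDist_empty]; positivity
  obtain ⟨T, hT⟩ : ∃ T, T = t + 8 * R := ⟨_, rfl⟩
  have close : ∀ c, 0 ≤ c → ∃ a ∈ A, dist (γ c) a < R := fun c hc =>
    (infDist_lt_iff hne).1 (by linarith [hr c hc])
  obtain ⟨a, haA, ha⟩ := close 0 le_rfl
  obtain ⟨b, hbA, hb⟩ := close T (by linarith)
  obtain ⟨s, hs, hsmin, hsR, hs2⟩ :=
    exists_nearest_on_ray hγ (T := T) ⟨le_rfl, by linarith⟩ ha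
  obtain ⟨s', hs', hsmin', hsR', hs2'⟩ :=
    exists_nearest_on_ray hγ (T := T) ⟨by linarith, le_rfl⟩ hb
  rw [abs_le] at hs2 hs2'
  obtain ⟨α, α0, α1, hα⟩ := hX a (γ s)
  obtain ⟨ω, ω0, ω1, hω⟩ := hX (γ s') b
  rw [dist_comm (γ s') b] at ω1 hω
  obtain ⟨l, hl⟩ : ∃ l, l = dist a (γ s) := ⟨_, rfl⟩
  obtain ⟨l', hl'⟩ : ∃ l', l' = dist b (γ s') := ⟨_, rfl⟩
  have l0 : 0 ≤ l := hl ▸ dist_nonneg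
  have l0' : 0 ≤ l' := hl' ▸ dist_nonneg
  rw [← hl] at α1 hα hsR
  rw [← hl'] at ω1 hω hsR'
  -- The middle piece keeps the parameter of `γ`; the arms are attached on both sides.
  let β : ℝ → X := fun u => if u ≤ s then α (u - s + l) else if u ≤ s' then γ u else ω (u - s')
  have hss : s + 4 * R ≤ s' := by linarith
  have β1 : ∀ u, u ≤ s → β u = α (u - s + l) := fun u hu => if_pos hu
  have β2 : ∀ u, s ≤ u → u ≤ s' → β u = γ u := by
    intro u hu hu'
    rcases hu.eq_or_lt with rfl | hlt
    · rw [β1 _ le_rfl, sub_self, zero_add, α1]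
    · simp only [β]
      rw [if_neg hlt.not_ge, if_pos hu']
  have β3 : ∀ u, s' ≤ u → β u = ω (u - s') := by
    intro u hu
    rcases hu.eq_or_lt with rfl | hlt
    · rw [β2 _ (by linarith) le_rfl, sub_self, ω0]
    · simp only [β]
      rw [if_neg (by linarith), if_neg hlt.not_ge]
  have βp : β (s - l) = a := by
    rw [β1 _ (by linarith), ← α0]; congr 1; ring
  have βq : β (s' + l') = b := by
    rw [β3 _ (by linarith), ← ω1]; congr 1; ring
  have hQ : QIEmbedOn β (Icc (s - l) (s' + l')) 3 0 := by
    refine qiEmbedOn_of_arms (s := s) (s' := s') (R := R) (by linarith)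
      ?_ ?_ ?_ ?_ ?_ (by linarith) (by linarith) (by linarith)
    · intro u hu v hv
      rw [β1 u hu.2, β1 v hv.2, hα _ ⟨by linarith [hu.1], by linarith [hu.2]⟩ _
        ⟨by linarith [hv.1], by linarith [hv.2]⟩]
      congr 1; ring
    · intro u hu v hv
      rw [β2 u hu.1 hu.2, β2 v hv.1 hv.2]
      exact hγ u (hs.1.trans hu.1) v (hs.1.trans hv.1)
    · intro u hu v hv
      rw [β3 u hu.1, β3 v hv.1, hω _ ⟨by linarith [hu.1], by linarith [hu.2]⟩ _
        ⟨by linarith [hv.1], by linarith [hv.2]⟩]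
      congr 1; ring
    · intro v hv
      rw [βp, β2 v hv.1 hv.2]
      have := hsmin v ⟨hs.1.trans hv.1, hv.2.trans hs'.2⟩
      linarith
    · intro v hv
      rw [βq, β2 v hv.1 hv.2]
      have := hsmin' v ⟨hs.1.trans hv.1, hv.2.trans hs'.2⟩
      linarith
  have hM := hA 3 0 (by norm_num) le_rfl β (s - l) (s' + l') (by linarith) hQ
    (βp ▸ haA) (βq ▸ hbA) t ⟨by linarith, by linarith⟩
  rw [β2 t (by linarith) (by linarith)] at hM
  linarith [le_max_left (μ 3 0) 0]
end
end

section
/- Let X be a geodesic metric space and let A, B, C be Morse subsets of X all having the same Morse gauge μ. For each D > 0 there is a number D′, depending only on D and μ, such that if A, B, C are pairwise D-close (i.e., N_D(A) ∩ N_D(B), N_D(B) ∩ N_D(C), and N_D(C) ∩ N_D(A) are all nonempty), then the intersection N_{D′}(A) ∩ N_{D′}(B) ∩ N_{D′}(C) is nonempty. -/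
/-!
Choose `p`, `q`, `r` near `A` and `B`, near `B` and `C`, and near `C` and `A` respectively.
Let `z` be a point of a geodesic `[q, r]` closest to `p`. The concatenations `[p, z] ∪ [z, q]`
and `[p, z] ∪ [z, r]` are `(3, 0)`-quasi-geodesics (`qiEmbedOn_concat`) with endpoints near `B`
and near `A` respectively, while `[q, r]` is a geodesic with endpoints near `C`. The Morse
property, extended to quasi-geodesics whose endpoints are merely near the set
(`MorseWithGauge.infDist_le_of_near`), thus places `z` near all three sets.
-/

open Metric Set Pointwise
open scoped ENNReal

noncomputable section

/-- The Morse property for quasi-geodesics whose endpoints are only `D`-close to `A`: moving the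
two endpoints into `A` costs `2 * D` in the additive constant. -/
lemma MorseWithGauge.infDist_le_of_near {X : Type*} [MetricSpace X] {A : Set X}
    {μ : ℝ → ℝ → ℝ} (hA : MorseWithGauge A μ) {K C D : ℝ} (hK : 1 ≤ K) (hC : 0 ≤ C)
    (hD : 0 < D) {γ : ℝ → X} {a b : ℝ} (hγ : QIEmbedOn γ (Icc a b) K C)
    (ha : infDist (γ a) A < D) (hb : infDist (γ b) A < D) {t : ℝ} (ht : t ∈ Icc a b) :
    infDist (γ t) A ≤ D + |μ K (C + 2 * D)| := by
  have habs := abs_nonneg (μ K (C + 2 * D))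
  -- `infDist` to the empty set is `0` by convention.
  rcases A.eq_empty_or_nonempty with rfl | hne
  · rw [infDist_empty]; positivity
  obtain ⟨x, hxA, hx⟩ := (infDist_lt_iff hne).1 ha
  obtain ⟨y, hyA, hy⟩ := (infDist_lt_iff hne).1 hb
  -- A degenerate interval has no room for two different endpoint values.
  rcases (ht.1.trans ht.2).eq_or_lt with hab | hab
  · have hta : t = a := le_antisymm (hab ▸ ht.2) ht.1
    rw [hta]; linarith
  let δ : ℝ → X := fun u => if u = a then x else if u = b then y else γ u
  have hδγ : ∀ u, dist (δ u) (γ u) ≤ D := by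
    intro u
    by_cases h1 : u = a
    · simp only [δ, h1, if_true]; rw [dist_comm]; exact hx.le
    by_cases h2 : u = b
    · simp only [δ, h2, hab.ne', if_true, if_false]; rw [dist_comm]; exact hy.le
    · simp [δ, h1, h2, hD.le]
  have hδ : QIEmbedOn δ (Icc a b) K (C + 2 * D) := by
    intro u hu v hv
    obtain ⟨h1, h2⟩ := hγ u hu v hv
    have hdu := hδγ u
    have hdv := hδγ v
    have h3 := dist_triangle4 (δ u) (γ u) (γ v) (δ v)
    have h4 := dist_triangle4 (γ u) (δ u) (δ v) (γ v)
    rw [dist_comm (γ v) (δ v)] at h3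
    rw [dist_comm (γ u) (δ u)] at h4
    constructor <;> linarith
  have hmain := hA K (C + 2 * D) hK (by linarith) δ a b hab.le hδ (by simpa [δ] using hxA)
    (by simpa [δ, hab.ne'] using hyA) t ht
  have h5 := infDist_le_infDist_add_dist (s := A) (x := γ t) (y := δ t)
  rw [dist_comm] at h5
  linarith [hδγ t, le_abs_self (μ K (C + 2 * D))]

/-- Two geodesics `α` and `β` issuing from a common point, traversed as one path through that
point, form a `(3, 0)`-quasi-geodesic if this point is a closest point on `β` to the far
endpoint of `α`. -/
lemma qiEmbedOn_concat {X : Type*} [MetricSpace X] {α β : ℝ → X} {L₁ L₂ : ℝ}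
    (hα : IsGeodesicOn α 0 L₁) (hβ : IsGeodesicOn β 0 L₂) (h0 : α 0 = β 0)
    (hmin : ∀ v ∈ Icc 0 L₂, L₁ ≤ dist (α L₁) (β v)) :
    QIEmbedOn (fun t => if t ≤ 0 then α (-t) else β t) (Icc (-L₁) L₂) 3 0 := by
  have mixed : ∀ u ∈ Icc 0 L₁, ∀ v ∈ Icc 0 L₂,
      (u + v) / 3 ≤ dist (α u) (β v) ∧ dist (α u) (β v) ≤ u + v := by
    intro u hu v hv
    have hL₁ : 0 ≤ L₁ := hu.1.trans hu.2
    have hL₂ : 0 ≤ L₂ := hv.1.trans hv.2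
    have e1 : dist (α 0) (α u) = u := by
      rw [hα 0 ⟨le_rfl, hL₁⟩ u hu, zero_sub, abs_neg, abs_of_nonneg hu.1]
    have e2 : dist (α 0) (β v) = v := by
      rw [h0, hβ 0 ⟨le_rfl, hL₂⟩ v hv, zero_sub, abs_neg, abs_of_nonneg hv.1]
    have e3 : dist (α L₁) (α u) = L₁ - u := by
      rw [hα L₁ ⟨hL₁, le_rfl⟩ u hu, abs_of_nonneg (sub_nonneg.2 hu.2)]
    have t1 := dist_triangle (α L₁) (α u) (β v)
    have t2 := dist_triangle (α 0) (α u) (β v)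
    have t3 := dist_triangle_left (α u) (β v) (α 0)
    -- The distance is at least `u` (by minimality) and at least `v - u`; combine as `2 : 1`.
    constructor <;> linarith [hmin v hv]
  intro s hs t ht
  by_cases h1 : s ≤ 0 <;> by_cases h2 : t ≤ 0
  · have e : dist (α (-s)) (α (-t)) = |s - t| := by
      rw [hα (-s) ⟨by linarith, by linarith [hs.1]⟩ (-t) ⟨by linarith, by linarith [ht.1]⟩,
        neg_sub_neg, abs_sub_comm]
    simp only [h1, h2, if_true, e]
    constructor <;> linarith [abs_nonneg (s - t)]
  · obtain ⟨m1, m2⟩ := mixed (-s) ⟨by linarith, by linarith [hs.1]⟩ t ⟨by linarith, ht.2⟩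
    simp only [h1, h2, if_true, if_false]
    rw [abs_of_nonpos (by linarith : s - t ≤ 0)]
    constructor <;> linarith
  · obtain ⟨m1, m2⟩ := mixed (-t) ⟨by linarith, by linarith [ht.1]⟩ s ⟨by linarith, hs.2⟩
    simp only [h1, h2, if_true, if_false]
    rw [abs_of_nonneg (by linarith : 0 ≤ s - t), dist_comm]
    constructor <;> linarith
  · have e := hβ s ⟨by linarith, hs.2⟩ t ⟨by linarith, ht.2⟩
    simp only [h1, h2, if_false, e]
    constructor <;> linarith [abs_nonneg (s - t)]

/-- The common point of two geodesics as in `qiEmbedOn_concat` is close to any Morse set that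
both far endpoints are close to. -/
lemma MorseWithGauge.infDist_corner_le {X : Type*} [MetricSpace X] {A : Set X}
    {μ : ℝ → ℝ → ℝ} (hA : MorseWithGauge A μ) {D : ℝ} (hD : 0 < D) {α β : ℝ → X} {L₁ L₂ : ℝ}
    (hL₁ : 0 ≤ L₁) (hL₂ : 0 ≤ L₂)
    (hα : IsGeodesicOn α 0 L₁) (hβ : IsGeodesicOn β 0 L₂) (h0 : α 0 = β 0)
    (hmin : ∀ v ∈ Icc 0 L₂, L₁ ≤ dist (α L₁) (β v))
    (h1 : infDist (α L₁) A < D) (h2 : infDist (β L₂) A < D) :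
    infDist (α 0) A ≤ D + |μ 3 (0 + 2 * D)| := by
  have key := hA.infDist_le_of_near (by norm_num) le_rfl hD (qiEmbedOn_concat hα hβ h0 hmin)
    (by simpa [hL₁] using h1)
    (by
      rcases hL₂.eq_or_lt with h | h
      · rw [← h] at h2 ⊢; simpa [h0] using h2
      · simpa [h.not_ge] using h2)
    (t := 0) ⟨by linarith, hL₂⟩
  simpa using key

/-- If `A`, `B`, `C` are Morse subsets of a geodesic space `X` with a common Morse gauge
`μ` and are pairwise `D`-close, then `N_{D'}(A) ∩ N_{D'}(B) ∩ N_{D'}(C)` is nonempty for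
some `D'` depending only on `D` and `μ`. -/
theorem pairwise_close_morse_triple_intersection
    : ∀ (μ : ℝ → ℝ → ℝ) (D : ℝ), 0 < D → ∃ D' : ℝ,
      ∀ (X : Type) [MetricSpace X], IsGeodesicSpace X →
        ∀ A B C : Set X, MorseWithGauge A μ → MorseWithGauge B μ → MorseWithGauge C μ →
          ({x : X | infDist x A < D} ∩ {x : X | infDist x B < D}).Nonempty →
          ({x : X | infDist x B < D} ∩ {x : X | infDist x C < D}).Nonempty →
          ({x : X | infDist x C < D} ∩ {x : X | infDist x A < D}).Nonempty →
          ({x : X | infDist x A < D'} ∩ {x : X | infDist x B < D'} ∩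
            {x : X | infDist x C < D'}).Nonempty := by
  intro μ D hD
  refine ⟨D + |μ 3 (0 + 2 * D)| + |μ 1 (0 + 2 * D)| + 1, ?_⟩
  intro X _ hX A B C hA hB hC ⟨p, hpA, hpB⟩ ⟨q, hqB, hqC⟩ ⟨r, hrC, hrA⟩
  simp only [mem_ofPred_eq] at hpA hpB hqB hqC hrC hrA
  obtain ⟨γ, hγ0, hγ1, hγ⟩ := hX q r
  set L := dist q r with hL
  have hL0 : 0 ≤ L := dist_nonneg
  have hcont : ContinuousOn γ (Icc 0 L) :=
    (LipschitzOnWith.of_dist_le_mul (K := 1) fun s hs t ht => by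
      simp [hγ s hs t ht, Real.dist_eq]).continuousOn
  obtain ⟨s, hs, hsmin⟩ := isCompact_Icc.exists_isMinOn ⟨0, le_rfl, hL0⟩
    (by fun_prop : ContinuousOn (fun t => dist p (γ t)) (Icc 0 L))
  obtain ⟨α, hα0, hα1, hα⟩ := hX (γ s) p
  have hmin : ∀ t ∈ Icc 0 L, dist (γ s) p ≤ dist p (γ t) := fun t ht => by
    rw [dist_comm (γ s) p]; exact hsmin ht
  have zA : infDist (γ s) A ≤ D + |μ 3 (0 + 2 * D)| := by
    rw [← hα0]
    refine hA.infDist_corner_le (β := fun t => γ (s + t)) (L₂ := L - s) hD dist_nonneg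
      (sub_nonneg.2 hs.2) hα ?_ (by simp [hα0]) ?_ (by rwa [hα1]) ?_
    · intro u hu v hv
      rw [hγ _ ⟨by linarith [hs.1, hu.1], by linarith [hu.2]⟩ _
        ⟨by linarith [hs.1, hv.1], by linarith [hv.2]⟩, add_sub_add_left_eq_sub]
    · intro v hv
      rw [hα1]
      exact hmin _ ⟨by linarith [hs.1, hv.1], by linarith [hv.2]⟩
    · simpa [hγ1] using hrA
  have zB : infDist (γ s) B ≤ D + |μ 3 (0 + 2 * D)| := by
    rw [← hα0]
    refine hB.infDist_corner_le (β := fun t => γ (s - t)) (L₂ := s) hD dist_nonneg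
      hs.1 hα ?_ (by simp [hα0]) ?_ (by rwa [hα1]) ?_
    · intro u hu v hv
      rw [hγ _ ⟨by linarith [hu.2], by linarith [hs.2, hu.1]⟩ _
        ⟨by linarith [hv.2], by linarith [hs.2, hv.1]⟩, sub_sub_sub_cancel_left, abs_sub_comm]
    · intro v hv
      rw [hα1]
      exact hmin _ ⟨by linarith [hv.2], by linarith [hs.2, hv.1]⟩
    · simpa [hγ0] using hqB
  have zC : infDist (γ s) C ≤ D + |μ 1 (0 + 2 * D)| := by
    refine hC.infDist_le_of_near le_rfl le_rfl hD (γ := γ) (a := 0) (b := L) ?_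
      (by rwa [hγ0]) (by rwa [hγ1]) hs
    intro u hu v hv
    rw [hγ u hu v hv]
    constructor <;> linarith
  have n3 := abs_nonneg (μ 3 (0 + 2 * D))
  have n1 := abs_nonneg (μ 1 (0 + 2 * D))
  refine ⟨γ s, ⟨?_, ?_⟩, ?_⟩ <;> simp only [mem_ofPred_eq] <;> linarith
end
end

section
/- In a geodesic metric space, suppose γ is a concatenation of two (L,0)-quasi-geodesics γ₁ and γ₂, where γ₁, γ₂, and γ are parametrized by arc length. Let C > 1 and r > 0 be such that the distance between the two endpoints a and c of γ is at least r and the length of γ is at most Cr. Then for each ρ ∈ (0,1] and each L′ > L + C + C/ρ + 1, there exists an (L′,0)-quasi-geodesic α, parametrized by arc length, connecting a and c, such that the image of α lies in the ρr-neighborhood of the image of γ and the length of α is at most the length of γ. -/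
/-! The curve `γ` is shortened by one geodesic chord across the concatenation point `m`.
Among all pairs `s ≤ m ≤ t` with `L' * dist (γ s) (γ t) ≤ t - s` (such as `s = t = m`), choose
by compactness one, `(s₀, t₀)`, with `t₀ - s₀` maximal, and replace `γ` on `[s₀, t₀]` by a geodesic
of length `d = dist (γ s₀) (γ t₀) ≤ (t₀ - s₀) / L'`. Since `t₀ - s₀ ≤ C r` and `L' > C / ρ`, the
chord is shorter than `ρ r`, so it stays near `γ`.

The new curve satisfies the lower quasi-geodesic bound with the same constant `L'`:
* two points on the same piece are handled by the hypotheses, as `L ≤ L'`;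
* for `s ≤ s₀` and `t ≥ t₀`, not both equal, maximality gives `L' * dist (γ s) (γ t) > t - s`, and
  replacing `[s₀, t₀]` by the chord only decreases the parameter distance;
* for `s < s₀` and a point `y` of the chord at distance `u` from `γ s₀`, maximality applied to
  `(s, t₀)` gives `dist (γ s) y ≥ dist (γ s) (γ t₀) - (d - u)`
  `≥ (s₀ - s) / L' + (t₀ - s₀) / L' - d + u ≥ (s₀ - s) / L' + u`; the other end is symmetric.
The upper bound holds because the new curve is parametrized by arc length, hence `1`-Lipschitz. -/

open Metric Set Pointwise
open scoped ENNReal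

noncomputable section

theorem ArcLengthParamOn.dist_le {X : Type*} [MetricSpace X] {γ : ℝ → X} {a b : ℝ}
    (h : ArcLengthParamOn γ a b) {s t : ℝ} (hs : a ≤ s) (hst : s ≤ t) (ht : t ≤ b) :
    dist (γ s) (γ t) ≤ t - s := by
  have h1 := eVariationOn.edist_le γ (left_mem_Icc.2 hst) (right_mem_Icc.2 hst)
  rw [h s t hs hst ht, edist_dist] at h1
  exact (ENNReal.ofReal_le_ofReal_iff (by linarith)).1 h1

theorem ArcLengthParamOn.concat {X : Type*} [MetricSpace X] {γ : ℝ → X} {a c b : ℝ}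
    (h : ArcLengthParamOn γ a c) (h' : ArcLengthParamOn γ c b) : ArcLengthParamOn γ a b := by
  intro s t hs hst ht
  rcases le_total t c with htc | htc
  · exact h s t hs hst htc
  rcases le_total c s with hcs | hcs
  · exact h' s t hcs hst ht
  have h2 := eVariationOn.Icc_add_Icc γ (s := univ) hcs htc (mem_univ c)
  simp only [univ_inter] at h2
  rw [← h2, h s c hs hcs le_rfl, h' c t le_rfl htc ht, ← ENNReal.ofReal_add (by linarith)
    (by linarith)]
  congr 1; ring

theorem ArcLengthParamOn.congr {X : Type*} [MetricSpace X] {γ α : ℝ → X} {a b : ℝ}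
    (h : ArcLengthParamOn γ a b) (he : ∀ t ∈ Icc a b, α t = γ t) : ArcLengthParamOn α a b := by
  intro s t hs hst ht
  rw [← h s t hs hst ht]
  exact eVariationOn.congr fun x hx => he x ⟨hs.trans hx.1, hx.2.trans ht⟩

theorem ArcLengthParamOn.mono {X : Type*} [MetricSpace X] {γ : ℝ → X} {a b a' b' : ℝ}
    (h : ArcLengthParamOn γ a b) (ha : a ≤ a') (hb : b' ≤ b) : ArcLengthParamOn γ a' b' :=
  fun s t hs hst ht => h s t (ha.trans hs) hst (ht.trans hb)

theorem ArcLengthParamOn.comp_add {X : Type*} [MetricSpace X] {γ : ℝ → X} {a b : ℝ}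
    (h : ArcLengthParamOn γ a b) (k : ℝ) :
    ArcLengthParamOn (fun t => γ (t + k)) (a - k) (b - k) := by
  intro s t hs hst ht
  have h1 := eVariationOn.comp_eq_of_monotoneOn γ (t := Icc s t) (fun x => x + k)
    (fun x _ y _ hxy => by simpa using hxy)
  rw [image_add_const_Icc, h (s + k) (t + k) (by linarith) (by linarith) (by linarith)] at h1
  rw [show (fun t => γ (t + k)) = γ ∘ (fun x => x + k) from rfl, h1]
  congr 1; ring

theorem IsGeodesicOn.arcLengthParamOn {X : Type*} [MetricSpace X] {γ : ℝ → X} {a b : ℝ}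
    (h : IsGeodesicOn γ a b) : ArcLengthParamOn γ a b := by
  intro s t hs hst ht
  apply le_antisymm
  · have hlip : LipschitzOnWith 1 γ (Icc s t) := by
      refine LipschitzOnWith.of_dist_le_mul fun x hx y hy => ?_
      rw [h x ⟨hs.trans hx.1, hx.2.trans ht⟩ y ⟨hs.trans hy.1, hy.2.trans ht⟩, Real.dist_eq]
      simp
    have h1 := hlip.comp_eVariationOn_le (g := id) (s := Icc s t) (fun x hx => hx)
    have h2 := (monotone_id.monotoneOn (Icc s t)).eVariationOn_eq
      (left_mem_Icc.2 hst) (right_mem_Icc.2 hst)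
    simp only [inter_self] at h2
    simpa using h1.trans (mul_le_mul_right h2.le _)
  · have h1 := eVariationOn.edist_le γ (left_mem_Icc.2 hst) (right_mem_Icc.2 hst)
    rwa [edist_dist, h s ⟨hs, hst.trans ht⟩ t ⟨hs.trans hst, ht⟩, abs_sub_comm,
      abs_of_nonneg (by linarith)] at h1

/-- The widest pair of parameters around `m` that is contracted by at least the factor `K`. -/
theorem exists_maximal_contracted_pair {X : Type*} [MetricSpace X] {γ : ℝ → X} {a m b : ℝ}
    (ham : a ≤ m) (hmb : m ≤ b) (harc : ArcLengthParamOn γ a b) (K : ℝ) :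
    ∃ s₀ t₀ : ℝ, s₀ ∈ Icc a m ∧ t₀ ∈ Icc m b ∧ K * dist (γ s₀) (γ t₀) ≤ t₀ - s₀ ∧
      ∀ s ∈ Icc a m, ∀ t ∈ Icc m b, t₀ - s₀ < t - s → t - s < K * dist (γ s) (γ t) := by
  have hlip : LipschitzOnWith 1 γ (Icc a b) := by
    refine LipschitzOnWith.of_dist_le_mul fun x hx y hy => ?_
    rw [Real.dist_eq, NNReal.coe_one, one_mul]
    rcases le_total x y with h | h
    · rw [abs_sub_comm]
      exact (harc.dist_le hx.1 h hy.2).trans (le_abs_self _)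
    · rw [dist_comm]
      exact (harc.dist_le hy.1 h hx.2).trans (le_abs_self _)
  have hc := hlip.continuousOn
  let F : ℝ × ℝ → ℝ := fun p => K * dist (γ p.1) (γ p.2) - (p.2 - p.1)
  have hF : ContinuousOn F (Icc a m ×ˢ Icc m b) := by
    have h1 : ContinuousOn (fun p : ℝ × ℝ => γ p.1) (Icc a m ×ˢ Icc m b) :=
      hc.comp continuousOn_fst fun p hp => ⟨hp.1.1, hp.1.2.trans hmb⟩
    have h2 : ContinuousOn (fun p : ℝ × ℝ => γ p.2) (Icc a m ×ˢ Icc m b) :=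
      hc.comp continuousOn_snd fun p hp => ⟨ham.trans hp.2.1, hp.2.2⟩
    exact (continuousOn_const.mul (continuous_dist.comp_continuousOn (h1.prodMk h2))).sub (continuousOn_snd.sub continuousOn_fst)
  have hK : IsCompact (Icc a m ×ˢ Icc m b) := isCompact_Icc.prod isCompact_Icc
  have hB : IsCompact (Icc a m ×ˢ Icc m b ∩ F ⁻¹' Iic 0) :=
    hK.of_isClosed_subset (hF.preimage_isClosed_of_isClosed hK.isClosed isClosed_Iic)
      inter_subset_left
  have hne : (Icc a m ×ˢ Icc m b ∩ F ⁻¹' Iic 0).Nonempty :=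
    ⟨(m, m), ⟨⟨ham, le_rfl⟩, ⟨le_rfl, hmb⟩⟩, by simp [F]⟩
  obtain ⟨⟨s₀, t₀⟩, ⟨⟨hs, ht⟩, h0⟩, hmax⟩ := hB.exists_isMaxOn hne
    (f := fun p : ℝ × ℝ => p.2 - p.1) (by fun_prop)
  refine ⟨s₀, t₀, hs, ht, by simpa [F] using h0, fun s hs' t ht' hlt => ?_⟩
  by_contra! hcon
  have := hmax (show (s, t) ∈ _ from ⟨⟨hs', ht'⟩, by simpa [F] using hcon⟩)
  simp only [mem_ofPred_eq] at this
  linarith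

/-- Straightening the concatenation of two `(L,0)`-quasi-geodesics: if `γ` on `[a,b]` is
parametrized by arc length, is the concatenation (at `m`) of two `(L,0)`-quasi-geodesics,
its endpoints are at distance at least `r`, and its length is at most `Cr`, then for every
`ρ ∈ (0,1]` and `L' > L + C + C/ρ + 1` there is an `(L',0)`-quasi-geodesic `α`
parametrized by arc length with the same endpoints, lying in the `ρr`-neighborhood of the
image of `γ`, whose length is at most the length of `γ`. -/
theorem straighten_concat_two_quasigeodesics
    {X : Type*} [MetricSpace X] (hX : IsGeodesicSpace X)
    (γ : ℝ → X) (a m b : ℝ) (ham : a ≤ m) (hmb : m ≤ b)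
    (L : ℝ) (hL : 1 ≤ L) (harc : ArcLengthParamOn γ a b)
    (h₁ : QIEmbedOn γ (Icc a m) L 0) (h₂ : QIEmbedOn γ (Icc m b) L 0)
    (C r : ℝ) (hC : 1 < C) (hr : 0 < r)
    (hdist : r ≤ dist (γ a) (γ b)) (hlen : b - a ≤ C * r)
    (ρ : ℝ) (hρ₀ : 0 < ρ) (hρ₁ : ρ ≤ 1)
    (L' : ℝ) (hL' : L + C + C / ρ + 1 < L') :
    ∃ (α : ℝ → X) (a' b' : ℝ), a' ≤ b' ∧ ArcLengthParamOn α a' b' ∧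
      QIEmbedOn α (Icc a' b') L' 0 ∧ α a' = γ a ∧ α b' = γ b ∧
      (∀ t ∈ Icc a' b', infDist (α t) (γ '' Icc a b) < ρ * r) ∧
      b' - a' ≤ b - a := by
  have hCρ : 0 < C / ρ := by positivity
  have hLL : L ≤ L' := by linarith
  have hL1 : 1 ≤ L' := by linarith
  have hL0 : 0 < L' := by linarith
  obtain ⟨s₀, t₀, hs₀, ht₀, hd, hmax⟩ := exists_maximal_contracted_pair ham hmb harc L'
  obtain ⟨g, hg0, hg1, hg⟩ := hX (γ s₀) (γ t₀)
  set d := dist (γ s₀) (γ t₀) with hd_def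
  have hd0 : 0 ≤ d := dist_nonneg
  have hdle : d ≤ t₀ - s₀ := by nlinarith
  have hdρ : d < ρ * r := by
    have h1 : C < L' * ρ := by rw [← div_lt_iff₀ hρ₀]; linarith
    have h2 : L' * d ≤ C * r := by linarith [hs₀.1, ht₀.2]
    have h3 : C * r < L' * ρ * r := mul_lt_mul_of_pos_right h1 hr
    by_contra! h4
    have := mul_le_mul_of_nonneg_left h4 hL0.le
    linarith
  have hge : IsGeodesicOn g 0 d := hg
  -- The chord occupies `[s₀, s₀ + d]`; `k` is the shift that then resumes `γ` at `t₀`.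
  set k := t₀ - s₀ - d with hk
  let α : ℝ → X := fun t =>
    if t ≤ s₀ then γ t else if t ≤ s₀ + d then g (t - s₀) else γ (t + k)
  have hα1 : ∀ t, t ≤ s₀ → α t = γ t := fun t ht => if_pos ht
  have hα2 : ∀ t, s₀ ≤ t → t ≤ s₀ + d → α t = g (t - s₀) := by
    intro t h1 h2
    rcases h1.eq_or_lt with rfl | h1
    · simp [α, hg0]
    · simp [α, not_le.2 h1, h2]
  have hα3 : ∀ t, s₀ + d ≤ t → α t = γ (t + k) := by
    intro t h1
    rcases h1.eq_or_lt with rfl | h1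
    · rw [hα2 _ (by linarith) le_rfl, add_sub_cancel_left, hg1]
      congr 1; rw [hk]; ring
    · simp [α, not_le.2 h1, not_le.2 (lt_of_le_of_lt (by linarith : s₀ ≤ s₀ + d) h1)]
  have harcα : ArcLengthParamOn α a (b - k) := by
    have p1 : ArcLengthParamOn α a s₀ :=
      (harc.mono le_rfl (hs₀.2.trans hmb)).congr fun t ht => hα1 t ht.2
    have p2 : ArcLengthParamOn α s₀ (s₀ + d) := by
      have := hge.arcLengthParamOn.comp_add (-s₀)
      rw [show 0 - -s₀ = s₀ by ring, show d - -s₀ = s₀ + d by ring] at this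
      exact this.congr fun t ht => hα2 t ht.1 ht.2
    have p3 : ArcLengthParamOn α (s₀ + d) (b - k) := by
      have := (harc.mono (ham.trans ht₀.1) le_rfl).comp_add k
      rw [show t₀ - k = s₀ + d by rw [hk]; ring] at this
      exact this.congr fun t ht => hα3 t ht.1
    exact (p1.concat p2).concat p3
  have hab' : a ≤ b - k := by rw [hk]; linarith [hs₀.1, ht₀.2]
  have hq1 : ∀ x y, a ≤ x → x ≤ y → y ≤ m → y - x ≤ L' * dist (γ x) (γ y) := by
    intro x y hx hxy hy
    have := (h₁ x ⟨hx, hxy.trans hy⟩ y ⟨hx.trans hxy, hy⟩).1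
    rw [sub_zero, abs_sub_comm, abs_of_nonneg (by linarith), one_div,
      inv_mul_le_iff₀ (by linarith)] at this
    exact this.trans (mul_le_mul_of_nonneg_right hLL dist_nonneg)
  have hq2 : ∀ x y, m ≤ x → x ≤ y → y ≤ b → y - x ≤ L' * dist (γ x) (γ y) := by
    intro x y hx hxy hy
    have := (h₂ x ⟨hx, hxy.trans hy⟩ y ⟨hx.trans hxy, hy⟩).1
    rw [sub_zero, abs_sub_comm, abs_of_nonneg (by linarith), one_div,
      inv_mul_le_iff₀ (by linarith)] at this
    exact this.trans (mul_le_mul_of_nonneg_right hLL dist_nonneg)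
  have hgg : ∀ u v, 0 ≤ u → u ≤ v → v ≤ d → dist (g u) (g v) = v - u := by
    intro u v hu huv hv
    rw [hg u ⟨hu, huv.trans hv⟩ v ⟨hu.trans huv, hv⟩, abs_sub_comm, abs_of_nonneg (by linarith)]
  have hlow : ∀ x y, a ≤ x → x ≤ y → y ≤ b - k → y - x ≤ L' * dist (α x) (α y) := by
    intro x y hx hxy hy
    rcases le_total y s₀ with hys | hys
    · rw [hα1 x (hxy.trans hys), hα1 y hys]
      exact hq1 x y hx hxy (hys.trans hs₀.2)
    rcases le_total (s₀ + d) x with hdx | hdx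
    · rw [hα3 x hdx, hα3 y (hdx.trans hxy)]
      have := hq2 (x + k) (y + k) (by rw [hk]; linarith [ht₀.1]) (by linarith) (by linarith)
      linarith
    rcases le_total s₀ x with hsx | hsx
    · rw [hα2 x hsx hdx]
      rcases le_total y (s₀ + d) with hyd | hyd
      · rw [hα2 y hys hyd, hgg _ _ (by linarith) (by linarith) (by linarith)]
        nlinarith
      · rw [hα3 y hyd]
        -- From the chord to the part of `γ` after it.
        rcases hyd.eq_or_lt with rfl | hyd
        · rw [show s₀ + d + k = t₀ by rw [hk]; ring, ← hg1,
            hgg _ _ (by linarith) (by linarith) le_rfl]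
          nlinarith
        have h1 := hmax s₀ hs₀ (y + k) ⟨by rw [hk]; linarith [ht₀.1], by linarith⟩
          (by rw [hk]; linarith)
        have h2 := dist_triangle (γ s₀) (g (x - s₀)) (γ (y + k))
        have h3 := hgg 0 (x - s₀) le_rfl (by linarith) (by linarith)
        rw [hg0] at h3
        have h4 := mul_le_mul_of_nonneg_left h2 hL0.le
        rw [h3] at h4
        have h5 : s₀ + d - x ≤ L' * (s₀ + d - x) := by nlinarith
        rw [hk] at h1 h4 ⊢
        nlinarith
    · rw [hα1 x hsx]
      rcases le_total y (s₀ + d) with hyd | hyd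
      · rw [hα2 y hys hyd]
        -- From the part of `γ` before the chord to the chord.
        rcases hsx.eq_or_lt with rfl | hsx
        · rw [← hg0, hgg _ _ le_rfl (by linarith) (by linarith)]
          nlinarith
        have h1 := hmax x ⟨hx, hsx.le.trans hs₀.2⟩ t₀ ht₀ (by linarith)
        have h2 := dist_triangle (γ x) (g (y - s₀)) (γ t₀)
        have h3 := hgg (y - s₀) d (by linarith) (by linarith) le_rfl
        rw [hg1] at h3
        have h4 := mul_le_mul_of_nonneg_left h2 hL0.le
        rw [h3] at h4
        have h5 : y - s₀ ≤ L' * (y - s₀) := by nlinarith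
        nlinarith
      · rw [hα3 y hyd]
        by_cases hlt : x < s₀ ∨ s₀ + d < y
        · have h1 := hmax x ⟨hx, hsx.trans hs₀.2⟩ (y + k)
            ⟨by rw [hk]; linarith [ht₀.1], by linarith⟩
            (by rw [hk]; rcases hlt with h | h <;> linarith)
          have : 0 ≤ k := by rw [hk]; linarith
          linarith
        · push Not at hlt
          obtain rfl : x = s₀ := le_antisymm hsx hlt.1
          obtain rfl : y = x + d := le_antisymm hlt.2 hyd
          rw [show x + d + k = t₀ by rw [hk]; ring, ← hd_def]
          nlinarith
  have hqi : ∀ x y, a ≤ x → x ≤ y → y ≤ b - k →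
      (1 / L') * |x - y| - 0 ≤ dist (α x) (α y) ∧ dist (α x) (α y) ≤ L' * |x - y| + 0 := by
    intro x y hx hxy hy
    rw [abs_sub_comm, abs_of_nonneg (by linarith : 0 ≤ y - x), sub_zero, add_zero, one_div,
      inv_mul_le_iff₀ hL0]
    refine ⟨hlow x y hx hxy hy, (harcα.dist_le hx hxy hy).trans ?_⟩
    nlinarith
  refine ⟨α, a, b - k, hab', harcα, ?_, hα1 a hs₀.1, ?_, ?_, ?_⟩
  · intro x hx y hy
    rcases le_total x y with h | h
    · exact hqi x y hx.1 h hy.2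
    · rw [abs_sub_comm, dist_comm]
      exact hqi y x hy.1 h hx.2
  · rw [hα3 _ (by rw [hk]; linarith [ht₀.2]), sub_add_cancel]
  · intro t ht
    have hmem : ∀ x, a ≤ x → x ≤ b → infDist (γ x) (γ '' Icc a b) < ρ * r := by
      intro x hx hx'
      rw [infDist_zero_of_mem (show γ x ∈ γ '' Icc a b from ⟨x, ⟨hx, hx'⟩, rfl⟩)]
      positivity
    rcases le_total t s₀ with h | h
    · rw [hα1 t h]
      exact hmem t ht.1 (h.trans (hs₀.2.trans hmb))
    rcases le_total t (s₀ + d) with h' | h'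
    · rw [hα2 t h h']
      have hmem₀ : γ s₀ ∈ γ '' Icc a b := ⟨s₀, ⟨hs₀.1, hs₀.2.trans hmb⟩, rfl⟩
      refine (infDist_le_dist_of_mem hmem₀).trans_lt ?_
      rw [← hg0, dist_comm, hgg _ _ le_rfl (by linarith) (by linarith)]
      linarith
    · rw [hα3 t h']
      exact hmem _ (by rw [hk]; linarith [ht₀.1]) (by linarith [ht.2])
  · rw [hk]; linarith
end
end
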